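/- For an integer k ≥ 1, there exists a k-nice subset of ℤ² with exactly k + 6 elements if and only if k ∈ {24, 48, 120, 168}. -/

import Mathlib

/-- A set `Q ⊆ ℤ²` is `k`-nice if every element is a nonzero coprime pair,
`Q` does not contain both a pair and its negation, and all cross determinants
are bounded by `k` in absolute value. -/
def IsKNice (k : ℕ) (Q : Set (ℤ × ℤ)) : Prop :=
  (∀ p ∈ Q, p ≠ (0, 0) ∧ Int.gcd p.1 p.2 = 1) ∧
  (∀ p ∈ Q, -p ∉ Q) ∧
  (∀ p ∈ Q, ∀ q ∈ Q, |p.1 * q.2 - q.1 * p.2| ≤ (k : ℤ))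

/-- `Q` is y-non-negative: all second coordinates are non-negative. -/
def YNonneg (Q : Set (ℤ × ℤ)) : Prop := ∀ p ∈ Q, 0 ≤ p.2

/-- The height of `Q` is at most `h`. -/
def HeightLe (Q : Set (ℤ × ℤ)) (h : ℕ) : Prop := ∀ p ∈ Q, |p.2| ≤ (h : ℤ)

/-- The height of `Q` is exactly `h`: the maximum of `|n|` over `(m, n) ∈ Q` is `h`. -/
def HeightEq (Q : Set (ℤ × ℤ)) (h : ℕ) : Prop :=
  HeightLe Q h ∧ ∃ p ∈ Q, |p.2| = (h : ℤ)

/-!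
After a unimodular change of coordinates and sign changes, a `k`-nice set lies in the upper half
plane and has the least possible height `h`, which forces `3 h² ≤ 4 k`. Its `n`-th row lies in an
interval `[n - y n, x n]`, and comparing rows `n` and `m` gives `m x n + n y m ≤ k + n m`. The row
contributes at most `c (x n) + c (y n) - c n` points, where `c` counts the integers in `[0, ·]`
coprime to `n`; together with the at most one point of height `0`, this bounds the set.

If `c` is replaced by an affine majorant, the main term is a sum of relative excesses `w n` of the
rows, with positive weights, subject to `w n + w m ≤ 2 k / (n m)`. This linear programme is bounded
by splitting the weights among pairs of rows: analytically when `h` is large, by pairing the rows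
greedily in opposite orders when `h` is moderate. For the small `k` where the affine majorants are
too crude, the exact counts are maximised by dynamic programming, keeping only the constraints
between pairs `(n, m)` on a monotone lattice path.

If `q` is a prime with `k < q ≤ k + 4`, then the slopes modulo `q` of the points of the set are
distinct, so it has at most `q + 1 ≤ k + 5` elements. This settles most of the small `k` without
computation. In the four exceptional cases `k = p² - 1` with `p = 5, 7, 11, 13`, and the extremal
set consists of the primitive vectors, up to sign, in the hexagon spanned by `(p, 0)`, `(p, p)`,
`(0, p)` and their negatives.
-/

/-! ### Nice sets and unimodular maps -/

/-- The determinant of the pair of vectors `p`, `q` of the integer plane. -/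
def planeDet (p q : ℤ × ℤ) : ℤ := p.1 * q.2 - q.1 * p.2

theorem planeDet_self (p : ℤ × ℤ) : planeDet p p = 0 := by
  simp [planeDet]

theorem eq_or_eq_neg_of_planeDet_eq_zero {p q : ℤ × ℤ} (hp : IsCoprime p.1 p.2)
    (hq : IsCoprime q.1 q.2) (h : planeDet p q = 0) : q = p ∨ q = -p := by
  obtain ⟨s, t, hst⟩ := hp
  rw [planeDet] at h
  have h₁ : q.1 = (s * q.1 + t * q.2) * p.1 := by linear_combination -q.1 * hst - t * h
  have h₂ : q.2 = (s * q.1 + t * q.2) * p.2 := by linear_combination -q.2 * hst + s * h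
  have hunit : IsUnit (s * q.1 + t * q.2) := hq.isUnit_of_dvd' ⟨_, h₁⟩ ⟨_, h₂⟩
  rcases Int.isUnit_iff.mp hunit with hc | hc <;> rw [hc] at h₁ h₂
  · exact .inl (Prod.ext (by simpa using h₁) (by simpa using h₂))
  · exact .inr (Prod.ext (by simpa using h₁) (by simpa using h₂))

theorem isKNice_iff {k : ℕ} {Q : Set (ℤ × ℤ)} :
    IsKNice k Q ↔ (∀ p ∈ Q, IsCoprime p.1 p.2) ∧
      ∀ p ∈ Q, ∀ q ∈ Q, (planeDet p q = 0 → p = q) ∧ |planeDet p q| ≤ k := by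
  simp only [IsKNice, ← Int.isCoprime_iff_gcd_eq_one]
  constructor
  · rintro ⟨hcop, hneg, hdet⟩
    refine ⟨fun p hp ↦ (hcop p hp).2, fun p hp q hq ↦ ⟨fun h ↦ ?_, hdet p hp q hq⟩⟩
    rcases eq_or_eq_neg_of_planeDet_eq_zero (hcop p hp).2 (hcop q hq).2 h with rfl | rfl
    · rfl
    · exact absurd hq (hneg p hp)
  · rintro ⟨hcop, hdet⟩
    have hne : ∀ p ∈ Q, p ≠ (0, 0) := by
      rintro _ hp rfl
      exact not_isCoprime_zero_zero (hcop _ hp)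
    refine ⟨fun p hp ↦ ⟨hne p hp, hcop p hp⟩, fun p hp hp' ↦ hne p hp ?_,
      fun p hp q hq ↦ (hdet p hp q hq).2⟩
    have h := (hdet p hp _ hp').1 (by simp only [planeDet, Prod.fst_neg, Prod.snd_neg]; ring)
    rw [Prod.ext_iff, Prod.fst_neg, Prod.snd_neg] at h
    exact Prod.ext (by omega) (by omega)

/-- The slope of `v` modulo `p`, a point of the projective line `ℙ¹(𝔽ₚ)`; the value `none` stands
for the point at infinity. -/
noncomputable def slopeMod (p : ℕ) [Fact p.Prime] (v : ℤ × ℤ) : Option (ZMod p) :=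
  if (v.2 : ZMod p) = 0 then none else some ((v.1 : ZMod p) / (v.2 : ZMod p))

theorem dvd_planeDet_of_slopeMod_eq {p : ℕ} [Fact p.Prime] {u v : ℤ × ℤ}
    (h : slopeMod p u = slopeMod p v) : (p : ℤ) ∣ planeDet u v := by
  rw [← ZMod.intCast_zmod_eq_zero_iff_dvd, planeDet]
  push_cast
  unfold slopeMod at h
  split_ifs at h with hu hv hv
  · rw [hu, hv, mul_zero, mul_zero, sub_zero]
  · rw [Option.some_inj, div_eq_div_iff hu hv] at h
    rw [h, sub_self]

namespace IsKNice

variable {k : ℕ} {Q : Finset (ℤ × ℤ)}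

theorem isCoprime (hQ : IsKNice k (Q : Set (ℤ × ℤ))) {p : ℤ × ℤ} (hp : p ∈ Q) :
    IsCoprime p.1 p.2 :=
  (isKNice_iff.mp hQ).1 p hp

theorem eq_of_planeDet_eq_zero (hQ : IsKNice k (Q : Set (ℤ × ℤ))) {p q : ℤ × ℤ}
    (hp : p ∈ Q) (hq : q ∈ Q) (h : planeDet p q = 0) : p = q :=
  ((isKNice_iff.mp hQ).2 p hp q hq).1 h

theorem abs_planeDet_le (hQ : IsKNice k (Q : Set (ℤ × ℤ))) {p q : ℤ × ℤ}
    (hp : p ∈ Q) (hq : q ∈ Q) : |planeDet p q| ≤ k :=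
  hQ.2.2 p hp q hq

theorem card_le_of_prime (hQ : IsKNice k (Q : Set (ℤ × ℤ))) {p : ℕ} (hp : p.Prime)
    (hk : k < p) : Q.card ≤ p + 1 := by
  have : Fact p.Prime := ⟨hp⟩
  have hinj : Set.InjOn (slopeMod p) Q := fun u hu v hv huv ↦
    hQ.eq_of_planeDet_eq_zero hu hv <|
      Int.eq_zero_of_abs_lt_dvd (dvd_planeDet_of_slopeMod_eq huv)
        ((hQ.abs_planeDet_le hu hv).trans_lt (by exact_mod_cast hk))
  calc Q.card ≤ (Finset.univ : Finset (Option (ZMod p))).card :=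
        Finset.card_le_card_of_injOn _ (fun _ _ ↦ Finset.mem_univ _) hinj
    _ = p + 1 := by rw [Finset.card_univ, Fintype.card_option, ZMod.card]

theorem injOn_of_abs_planeDet_eq (hQ : IsKNice k (Q : Set (ℤ × ℤ))) {F : ℤ × ℤ → ℤ × ℤ}
    (hF : ∀ u ∈ Q, ∀ v ∈ Q, |planeDet (F u) (F v)| = |planeDet u v|) : Set.InjOn F Q :=
  fun u hu v hv huv ↦ hQ.eq_of_planeDet_eq_zero hu hv <| by
    rw [← abs_eq_zero, ← hF u hu v hv, huv, planeDet_self, abs_zero]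

theorem image (hQ : IsKNice k (Q : Set (ℤ × ℤ))) {F : ℤ × ℤ → ℤ × ℤ}
    (hcop : ∀ u ∈ Q, IsCoprime (F u).1 (F u).2)
    (hF : ∀ u ∈ Q, ∀ v ∈ Q, |planeDet (F u) (F v)| = |planeDet u v|) :
    IsKNice k (Q.image F : Set (ℤ × ℤ)) := by
  rw [isKNice_iff, Finset.coe_image]
  simp only [Set.forall_mem_image, Finset.mem_coe]
  refine ⟨@hcop, fun u hu v hv ↦ ⟨fun h ↦ ?_, (hF u hu v hv).trans_le (hQ.abs_planeDet_le hu hv)⟩⟩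
  rw [hQ.eq_of_planeDet_eq_zero hu hv (by rw [← abs_eq_zero, ← hF u hu v hv, h, abs_zero])]

end IsKNice

/-- The linear map of the integer plane with matrix `!![a, b; c, d]`. -/
def planeMap (a b c d : ℤ) (u : ℤ × ℤ) : ℤ × ℤ := (a * u.1 + b * u.2, c * u.1 + d * u.2)

theorem planeDet_planeMap {a b c d : ℤ} (h : a * d - b * c = 1) (u v : ℤ × ℤ) :
    planeDet (planeMap a b c d u) (planeMap a b c d v) = planeDet u v := by
  simp only [planeDet, planeMap]
  linear_combination (u.1 * v.2 - v.1 * u.2) * h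

theorem isCoprime_planeMap {a b c d : ℤ} (h : a * d - b * c = 1) {u : ℤ × ℤ}
    (hu : IsCoprime u.1 u.2) : IsCoprime (planeMap a b c d u).1 (planeMap a b c d u).2 := by
  obtain ⟨s, t, hst⟩ := hu
  refine ⟨s * d - t * c, t * a - s * b, ?_⟩
  simp only [planeMap]
  linear_combination hst + (s * u.1 + t * u.2) * h

/-- Of the two vectors `u`, `-u`, one with non-negative second coordinate. -/
def flipUp (u : ℤ × ℤ) : ℤ × ℤ := if 0 ≤ u.2 then u else -u

theorem flipUp_eq_or (u : ℤ × ℤ) : flipUp u = u ∨ flipUp u = -u := by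
  unfold flipUp
  split_ifs <;> simp

theorem snd_flipUp (u : ℤ × ℤ) : (flipUp u).2 = |u.2| := by
  unfold flipUp
  split_ifs with h
  · rw [abs_of_nonneg h]
  · rw [Prod.snd_neg, abs_of_neg (by omega)]

theorem abs_planeDet_flipUp (u v : ℤ × ℤ) :
    |planeDet (flipUp u) (flipUp v)| = |planeDet u v| := by
  have hneg : planeDet (-u) v = -planeDet u v ∧ planeDet u (-v) = -planeDet u v ∧
      planeDet (-u) (-v) = planeDet u v := by
    simp only [planeDet, Prod.fst_neg, Prod.snd_neg]
    exact ⟨by ring, by ring, by ring⟩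
  rcases flipUp_eq_or u with hu | hu <;> rcases flipUp_eq_or v with hv | hv <;>
    simp only [hu, hv, hneg, abs_neg]

theorem isCoprime_flipUp {u : ℤ × ℤ} (hu : IsCoprime u.1 u.2) :
    IsCoprime (flipUp u).1 (flipUp u).2 := by
  rcases flipUp_eq_or u with h | h <;> rw [h]
  · exact hu
  · exact hu.neg_neg

/-! ### Normalisation to minimal height -/

theorem four_mul_mul_sub_le_sq (x h : ℤ) : 4 * (x * (h - x)) ≤ h ^ 2 := by
  linarith [sq_nonneg (2 * x - h), show (2 * x - h) ^ 2 = h ^ 2 - 4 * (x * (h - x)) by ring]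

/- The product of the three quantities is that of `t (h - t)`, `y (h - y)` and `z (h - z)`. -/
theorem exists_four_mul_le_sq {h y z : ℤ} (t : ℤ) (hy : y ∈ Set.Icc 0 h)
    (hz : z ∈ Set.Icc 0 h) :
    4 * (t * y) ≤ h ^ 2 ∨ 4 * ((h - t) * z) ≤ h ^ 2 ∨ 4 * ((h - y) * (h - z)) ≤ h ^ 2 := by
  by_contra! hlt
  obtain ⟨h₁, h₂, h₃⟩ := hlt
  have hsq : 0 ≤ h ^ 2 := sq_nonneg h
  have hlt : h ^ 2 * h ^ 2 * h ^ 2 <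
      4 * (t * y) * (4 * ((h - t) * z)) * (4 * ((h - y) * (h - z))) :=
    mul_lt_mul'' (mul_lt_mul'' h₁ h₂ hsq hsq) h₃ (by positivity) hsq
  have hnonneg : ∀ x ∈ Set.Icc 0 h, 0 ≤ 4 * (x * (h - x)) := fun x hx ↦
    mul_nonneg zero_le_four (mul_nonneg hx.1 (sub_nonneg.mpr hx.2))
  have hle : 4 * (t * (h - t)) * (4 * (y * (h - y))) * (4 * (z * (h - z))) ≤
      h ^ 2 * h ^ 2 * h ^ 2 :=
    mul_le_mul (mul_le_mul (four_mul_mul_sub_le_sq t h) (four_mul_mul_sub_le_sq y h)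
      (hnonneg y hy) hsq) (four_mul_mul_sub_le_sq z h) (hnonneg z hz) (by positivity)
  exact hlt.not_ge (le_trans (by ring_nf; rfl) hle)

theorem three_mul_sq_le_four_mul {k h t : ℤ} {u v : ℤ × ℤ} (ht : t ∈ Set.Icc 0 h)
    (hu : u.2 ∈ Set.Icc 0 h) (hv : v.2 ∈ Set.Icc 0 h) (hu₁ : h ≤ |u.1|) (hv₁ : h ≤ |v.1 - v.2|)
    (hut : |planeDet u (t, h)| ≤ k) (hvt : |planeDet v (t, h)| ≤ k) (huv : |planeDet u v| ≤ k) :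
    3 * h ^ 2 ≤ 4 * k := by
  obtain ⟨y, w⟩ := u
  obtain ⟨z, r⟩ := v
  simp only [planeDet, abs_le] at *
  obtain ⟨ht₀, ht₁⟩ := ht
  obtain ⟨hw₀, hw₁⟩ := hu
  obtain ⟨hr₀, hr₁⟩ := hv
  have : 0 ≤ h := ht₀.trans ht₁
  rcases le_abs'.mp hu₁ with hu₁ | hu₁
  · nlinarith [mul_nonneg ht₀ hw₀]
  rcases le_abs'.mp hv₁ with hv₁ | hv₁
  · have h₁ : h ^ 2 - t * w ≤ k := by nlinarith
    have h₂ : h ^ 2 - (h - t) * r ≤ k := by nlinarith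
    have h₃ : h ^ 2 - (h - w) * (h - r) ≤ k := by
      nlinarith [mul_le_mul_of_nonneg_right hu₁ hr₀, mul_le_mul_of_nonneg_right hv₁ hw₀]
    rcases exists_four_mul_le_sq t ⟨hw₀, hw₁⟩ ⟨hr₀, hr₁⟩ with h' | h' | h' <;> linarith
  · nlinarith [mul_nonneg (sub_nonneg.mpr ht₁) hr₀]

/-- A `k`-nice set `Q` in the upper half plane of height `h`, whose height cannot be lowered by a
unimodular change of coordinates and whose leftmost point of height `h` is `(t, h)`, where
`0 ≤ t < h`. -/
structure IsHeightReduced (k h : ℕ) (t : ℤ) (Q : Finset (ℤ × ℤ)) : Prop where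
  isKNice : IsKNice k (Q : Set (ℤ × ℤ))
  yNonneg : YNonneg Q
  heightLe : HeightLe Q h
  mem : (t, (h : ℤ)) ∈ Q
  le_of_mem : ∀ x, (x, (h : ℤ)) ∈ Q → t ≤ x
  nonneg : 0 ≤ t
  lt : t < h
  exists_le_abs : ∀ c d : ℤ, IsCoprime c d → ∃ u ∈ Q, (h : ℤ) ≤ |c * u.1 + d * u.2|

/-- Among the heights of `k`-nice sets with `N` elements, `h` is the least. -/
def IsMinHeight (k N h : ℕ) : Prop :=
  IsLeast {H | ∃ Q : Finset (ℤ × ℤ), IsKNice k (Q : Set (ℤ × ℤ)) ∧ Q.card = N ∧ HeightLe Q H} h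

theorem exists_isMinHeight {k : ℕ} {Q : Finset (ℤ × ℤ)} (hQ : IsKNice k (Q : Set (ℤ × ℤ))) :
    ∃ h, IsMinHeight k Q.card h := by
  refine ⟨_, Nat.sInf_mem ⟨Q.sup fun v ↦ v.2.natAbs, Q, hQ, rfl, fun v hv ↦ ?_⟩,
    fun _ hH ↦ Nat.sInf_le hH⟩
  rw [Int.abs_eq_natAbs]
  exact_mod_cast Finset.le_sup (f := fun v : ℤ × ℤ ↦ v.2.natAbs) hv

theorem IsMinHeight.exists_le_abs {k h : ℕ} {Q : Finset (ℤ × ℤ)} (hh : IsMinHeight k Q.card h)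
    (hne : Q.Nonempty) (hQ : IsKNice k (Q : Set (ℤ × ℤ))) : ∃ v ∈ Q, (h : ℤ) ≤ |v.2| := by
  by_contra! hlt
  obtain ⟨v, hv⟩ := hne
  have hpos : 0 < h := by exact_mod_cast (abs_nonneg _).trans_lt (hlt v hv)
  have := hh.2 (show h - 1 ∈ _ from ⟨Q, hQ, rfl, fun u hu ↦ by have := hlt u hu; omega⟩)
  omega

theorem IsMinHeight.exists_le_abs_linear {k h : ℕ} {Q : Finset (ℤ × ℤ)}
    (hh : IsMinHeight k Q.card h) (hne : Q.Nonempty) (hQ : IsKNice k (Q : Set (ℤ × ℤ)))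
    {c d : ℤ} (hcd : IsCoprime c d) : ∃ u ∈ Q, (h : ℤ) ≤ |c * u.1 + d * u.2| := by
  obtain ⟨a, b, hab⟩ := hcd
  have hdet : b * d - -a * c = 1 := by linear_combination hab
  have hF : ∀ u ∈ Q, ∀ v ∈ Q, |planeDet (planeMap b (-a) c d u) (planeMap b (-a) c d v)| =
      |planeDet u v| := fun u _ v _ ↦ by rw [planeDet_planeMap hdet]
  have himage := hQ.image (fun u hu ↦ isCoprime_planeMap hdet (hQ.isCoprime hu)) hF
  rw [← Finset.card_image_of_injOn (hQ.injOn_of_abs_planeDet_eq hF)] at hh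
  obtain ⟨_, hv, hle⟩ := hh.exists_le_abs (hne.image _) himage
  obtain ⟨u, hu, rfl⟩ := Finset.mem_image.mp hv
  exact ⟨u, hu, hle⟩

theorem IsKNice.card_le_one_of_heightLe_zero {k : ℕ} {Q : Finset (ℤ × ℤ)}
    (hQ : IsKNice k (Q : Set (ℤ × ℤ))) (h : HeightLe Q 0) : Q.card ≤ 1 := by
  refine Finset.card_le_one.mpr fun u hu v hv ↦ hQ.eq_of_planeDet_eq_zero hu hv ?_
  rw [planeDet, abs_nonpos_iff.mp (h u hu), abs_nonpos_iff.mp (h v hv), mul_zero, mul_zero,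
    sub_zero]

/-- The change of coordinates that normalises a nice set: make the second coordinate non-negative,
then shear by `j`. -/
def normalizeBy (j : ℤ) (u : ℤ × ℤ) : ℤ × ℤ := planeMap 1 (-j) 0 1 (flipUp u)

theorem normalizeBy_eq (j : ℤ) (u : ℤ × ℤ) :
    normalizeBy j u = ((flipUp u).1 - j * |u.2|, |u.2|) := by
  simp only [normalizeBy, planeMap, ← snd_flipUp, one_mul, zero_mul, zero_add, neg_mul,
    sub_eq_add_neg]

theorem abs_planeDet_normalizeBy (j : ℤ) (u v : ℤ × ℤ) :
    |planeDet (normalizeBy j u) (normalizeBy j v)| = |planeDet u v| := by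
  rw [normalizeBy, normalizeBy, planeDet_planeMap (by ring), abs_planeDet_flipUp]

theorem isCoprime_normalizeBy (j : ℤ) {u : ℤ × ℤ} (hu : IsCoprime u.1 u.2) :
    IsCoprime (normalizeBy j u).1 (normalizeBy j u).2 :=
  isCoprime_planeMap (by ring) (isCoprime_flipUp hu)

theorem IsMinHeight.isHeightReduced_image {k h : ℕ} {Q : Finset (ℤ × ℤ)}
    (hmin : IsMinHeight k Q.card h) (hQ : IsKNice k (Q : Set (ℤ × ℤ))) (hheight : HeightLe Q h)
    (hh : 0 < h) {q : ℤ × ℤ} (hq : q ∈ Q) (hqh : |q.2| = h)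
    (hleft : ∀ u ∈ Q, |u.2| = h → (flipUp q).1 ≤ (flipUp u).1) :
    IsHeightReduced k h ((flipUp q).1 % h) (Q.image (normalizeBy ((flipUp q).1 / h))) := by
  set j := (flipUp q).1 / h with hj
  have hF : ∀ u ∈ Q, ∀ v ∈ Q, |planeDet (normalizeBy j u) (normalizeBy j v)| = |planeDet u v| :=
    fun u _ v _ ↦ abs_planeDet_normalizeBy j u v
  have himage := hQ.image (fun u hu ↦ isCoprime_normalizeBy j (hQ.isCoprime hu)) hF
  have hmod : (flipUp q).1 % h = (flipUp q).1 - j * h := by rw [hj, mul_comm, ← Int.emod_def]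
  have hz : (0 : ℤ) < h := by exact_mod_cast hh
  refine ⟨himage, ?_, ?_, ?_, fun x hx ↦ ?_, Int.emod_nonneg _ hz.ne', Int.emod_lt_of_pos _ hz,
    fun c d ↦ IsMinHeight.exists_le_abs_linear ?_ (.image ⟨q, hq⟩ _) himage⟩
  · simp only [YNonneg, Finset.coe_image, Set.forall_mem_image, normalizeBy_eq, abs_nonneg,
      implies_true]
  · simp only [HeightLe, Finset.coe_image, Set.forall_mem_image, normalizeBy_eq, abs_abs]
    exact hheight
  · exact Finset.mem_image.mpr ⟨q, hq, by rw [normalizeBy_eq, hqh, hmod]⟩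
  · obtain ⟨u, hu, hux⟩ := Finset.mem_image.mp hx
    rw [normalizeBy_eq, Prod.mk.injEq] at hux
    have := hleft u hu hux.2
    rw [hux.2] at hux
    linarith [hux.1]
  · rwa [Finset.card_image_of_injOn (hQ.injOn_of_abs_planeDet_eq hF)]

theorem IsKNice.exists_isHeightReduced {k : ℕ} {Q : Finset (ℤ × ℤ)}
    (hQ : IsKNice k (Q : Set (ℤ × ℤ))) (hcard : 1 < Q.card) :
    ∃ (h : ℕ) (t : ℤ) (R : Finset (ℤ × ℤ)), R.card = Q.card ∧ IsHeightReduced k h t R := by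
  obtain ⟨h, hmin⟩ := exists_isMinHeight hQ
  obtain ⟨P, hP, hPQ, hheight⟩ := hmin.1
  rw [← hPQ] at hcard hmin ⊢
  have hh : 0 < h := Nat.pos_of_ne_zero fun h₀ ↦
    hcard.not_ge (hP.card_le_one_of_heightLe_zero (h₀ ▸ hheight))
  obtain ⟨p, hp, hph⟩ := hmin.exists_le_abs (Finset.card_pos.mp (by omega)) hP
  obtain ⟨q, hq, hleft⟩ := Finset.exists_min_image (P.filter fun u ↦ |u.2| = (h : ℤ))
    (fun u ↦ (flipUp u).1) ⟨p, Finset.mem_filter.mpr ⟨hp, (hheight p hp).antisymm hph⟩⟩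
  rw [Finset.mem_filter] at hq
  refine ⟨h, _, _, Finset.card_image_of_injOn (hP.injOn_of_abs_planeDet_eq fun u _ v _ ↦
    abs_planeDet_normalizeBy _ u v), hmin.isHeightReduced_image hP hheight hh hq.1 hq.2 ?_⟩
  exact fun u hu hu' ↦ hleft u (Finset.mem_filter.mpr ⟨hu, hu'⟩)

theorem IsHeightReduced.snd_mem_Icc {k h : ℕ} {t : ℤ} {Q : Finset (ℤ × ℤ)}
    (hQ : IsHeightReduced k h t Q) {u : ℤ × ℤ} (hu : u ∈ Q) : u.2 ∈ Set.Icc (0 : ℤ) h :=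
  ⟨hQ.yNonneg u hu, (le_abs_self _).trans (hQ.heightLe u hu)⟩

theorem IsHeightReduced.three_mul_sq_le {k h : ℕ} {t : ℤ} {Q : Finset (ℤ × ℤ)}
    (hQ : IsHeightReduced k h t Q) : 3 * h ^ 2 ≤ 4 * k := by
  obtain ⟨u, hu, hu₁⟩ := hQ.exists_le_abs 1 0 isCoprime_one_left
  obtain ⟨v, hv, hv₁⟩ := hQ.exists_le_abs 1 (-1) isCoprime_one_left
  rw [one_mul, zero_mul, add_zero] at hu₁
  rw [one_mul, neg_one_mul, ← sub_eq_add_neg] at hv₁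
  exact_mod_cast three_mul_sq_le_four_mul ⟨hQ.nonneg, hQ.lt.le⟩ (hQ.snd_mem_Icc hu)
    (hQ.snd_mem_Icc hv) hu₁ hv₁ (hQ.isKNice.abs_planeDet_le hu hQ.mem)
    (hQ.isKNice.abs_planeDet_le hv hQ.mem) (hQ.isKNice.abs_planeDet_le hu hv)

/-! ### Rows of a reduced nice set -/

/-- The number of integers in `[0, x]` that are coprime to `n`. -/
def coprimeCount (n x : ℕ) : ℕ := Nat.count n.Coprime (x + 1)

/-- The integers in `[a, b)` that are coprime to `n`. -/
noncomputable def coprimesIco (n : ℕ) (a b : ℤ) : Finset ℤ := {j ∈ Finset.Ico a b | IsCoprime j n}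

theorem mem_coprimesIco {n : ℕ} {a b j : ℤ} :
    j ∈ coprimesIco n a b ↔ (a ≤ j ∧ j < b) ∧ IsCoprime j n := by
  rw [coprimesIco, Finset.mem_filter, Finset.mem_Ico]

theorem card_coprimesIco_add (n : ℕ) {a b c : ℤ} (hab : a ≤ b) (hbc : b ≤ c) :
    (coprimesIco n a b).card + (coprimesIco n b c).card = (coprimesIco n a c).card := by
  rw [coprimesIco, coprimesIco, coprimesIco, ← Finset.Ico_union_Ico_eq_Ico hab hbc,
    Finset.filter_union, Finset.card_union_of_disjoint]
  exact Finset.disjoint_filter_filter (Finset.Ico_disjoint_Ico_consecutive a b c)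

theorem mem_filter_coprime_range {n x i : ℕ} :
    i ∈ (Finset.range (x + 1)).filter n.Coprime ↔ i < x + 1 ∧ IsCoprime (i : ℤ) n := by
  rw [Finset.mem_filter, Finset.mem_range, Nat.isCoprime_iff_coprime, Nat.coprime_comm]

theorem card_coprimesIco_zero (n x : ℕ) :
    (coprimesIco n 0 (x + 1)).card = coprimeCount n x := by
  rw [coprimeCount, Nat.count_eq_card_filter_range]
  refine Finset.card_nbij' Int.toNat (fun i ↦ (i : ℤ)) ?_ ?_ ?_ ?_ <;>
    simp only [Finset.mem_coe, Set.MapsTo, Set.LeftInvOn, mem_filter_coprime_range,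
      mem_coprimesIco]
  · rintro j ⟨hj, hcop⟩
    rw [Int.toNat_of_nonneg hj.1]
    exact ⟨by omega, hcop⟩
  · exact fun i hi ↦ ⟨by omega, hi.2⟩
  · exact fun j hj ↦ Int.toNat_of_nonneg hj.1.1
  · exact fun i _ ↦ Int.toNat_natCast i

theorem isCoprime_natCast_sub_left {q n : ℕ} (hqn : q ∣ n) {j : ℤ} :
    IsCoprime (n - j) (q : ℤ) ↔ IsCoprime j q := by
  obtain ⟨d, rfl⟩ := hqn
  rw [← IsCoprime.neg_left_iff, neg_sub, Nat.cast_mul, sub_eq_add_neg, ← mul_neg,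
    IsCoprime.add_mul_left_left_iff]

theorem card_coprimesIco_reflect {q n : ℕ} (hqn : q ∣ n) (a b : ℤ) :
    (coprimesIco q (n + 1 - b) (n + 1 - a)).card = (coprimesIco q a b).card := by
  refine Finset.card_nbij' (fun j ↦ n - j) (fun j ↦ n - j) ?_ ?_ ?_ ?_ <;>
    simp only [Finset.mem_coe, Set.MapsTo, Set.LeftInvOn, mem_coprimesIco,
      isCoprime_natCast_sub_left hqn]
  · exact fun j hj ↦ ⟨by omega, hj.2⟩
  · exact fun j hj ↦ ⟨by omega, hj.2⟩
  · exact fun j _ ↦ sub_sub_cancel _ _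
  · exact fun j _ ↦ sub_sub_cancel _ _

theorem card_coprimesIco_add_coprimeCount {q n x y : ℕ} (hqn : q ∣ n) (h : n ≤ x + y + 1) :
    (coprimesIco q (n - y) (x + 1)).card + coprimeCount q n =
      coprimeCount q x + coprimeCount q y := by
  have hy : (coprimesIco q (n - y) (n + 1)).card = coprimeCount q y := by
    rw [← card_coprimesIco_zero, ← card_coprimesIco_reflect hqn 0]
    simp
  rw [← hy, ← card_coprimesIco_zero, ← card_coprimesIco_zero]
  rcases le_total (0 : ℤ) (n - y) with hny | hny
  · rw [← card_coprimesIco_add q hny (by omega : (n - y : ℤ) ≤ x + 1),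
      ← card_coprimesIco_add q hny (by omega : (n - y : ℤ) ≤ n + 1)]
    omega
  · rw [← card_coprimesIco_add q hny (by omega : (0 : ℤ) ≤ x + 1),
      ← card_coprimesIco_add q hny (by omega : (0 : ℤ) ≤ n + 1)]
    omega

/-- For every `1 ≤ n ≤ h`, the interval `[n - y n, x n]` is to contain the `n`-th row of a `k`-nice
set of height `h`; the left ends are reflected so that `x` and `y` play symmetric roles. -/
structure IsRowBound (k h : ℕ) (x y : ℕ → ℕ) : Prop where
  mul_add_mul_le : ∀ n ∈ Finset.Icc 1 h, ∀ m ∈ Finset.Icc 1 h, m * x n + n * y m ≤ k + n * m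
  le_add_add_one : ∀ n ∈ Finset.Icc 1 h, n ≤ x n + y n + 1

/-- The interval `[h - u, s]` has both ends coprime to `h`, and its left end lies in `[0, h)`. -/
structure IsTopRow (h s u : ℕ) : Prop where
  coprime_right : h.Coprime s
  coprime_left : h.Coprime u
  le_add : h ≤ s + u
  mem_Icc : u ∈ Finset.Icc 1 h

theorem IsTopRow.pos {h s u : ℕ} (htop : IsTopRow h s u) : 0 < h :=
  have hu := Finset.mem_Icc.mp htop.mem_Icc
  hu.1.trans hu.2

/-- The sum over the rows `1 ≤ n ≤ h` of the number of integers in `[0, x n]` that are coprime to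
`n`. -/
def coprimeSum (h : ℕ) (x : ℕ → ℕ) : ℕ := ∑ n ∈ Finset.Icc 1 h, coprimeCount n (x n)

theorem IsKNice.card_filter_snd_eq_zero_le {k : ℕ} {Q : Finset (ℤ × ℤ)}
    (hQ : IsKNice k (Q : Set (ℤ × ℤ))) : (Q.filter fun u ↦ u.2 = 0).card ≤ 1 := by
  refine Finset.card_le_one.mpr fun u hu v hv ↦ ?_
  rw [Finset.mem_filter] at hu hv
  exact hQ.eq_of_planeDet_eq_zero hu.1 hv.1 (by rw [planeDet, hu.2, hv.2, mul_zero, mul_zero,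
    sub_zero])

theorem IsKNice.card_row_le {k : ℕ} {Q : Finset (ℤ × ℤ)} (hQ : IsKNice k (Q : Set (ℤ × ℤ)))
    {n x y : ℕ} (hxy : ∀ u ∈ Q, u.2 = n → (n - y : ℤ) ≤ u.1 ∧ u.1 ≤ x) :
    (Q.filter fun u ↦ u.2 = (n : ℤ)).card ≤ (coprimesIco n (n - y) (x + 1)).card := by
  refine Finset.card_le_card_of_injOn Prod.fst (fun u hu ↦ ?_) fun u hu v hv huv ↦ ?_
  · obtain ⟨huQ, hun⟩ := Finset.mem_filter.mp hu
    have := hxy u huQ hun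
    exact mem_coprimesIco.mpr ⟨⟨this.1, by omega⟩, hun ▸ hQ.isCoprime huQ⟩
  · exact Prod.ext huv ((Finset.mem_filter.mp hu).2.trans (Finset.mem_filter.mp hv).2.symm)

theorem IsKNice.card_add_coprimeSum_le {k h : ℕ} {Q : Finset (ℤ × ℤ)}
    (hQ : IsKNice k (Q : Set (ℤ × ℤ))) (hpos : ∀ u ∈ Q, u.2 ∈ Set.Icc (0 : ℤ) h) {x y : ℕ → ℕ}
    (hxy : IsRowBound k h x y) (hrow : ∀ n ∈ Finset.Icc 1 h, ∀ u ∈ Q, u.2 = n →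
      (n - y n : ℤ) ≤ u.1 ∧ u.1 ≤ x n) :
    Q.card + coprimeSum h id ≤ 1 + coprimeSum h x + coprimeSum h y := by
  have hfib : (Q.filter fun u ↦ ¬u.2 = 0).card =
      ∑ n ∈ Finset.Icc 1 h, (Q.filter fun u ↦ u.2 = (n : ℤ)).card := by
    rw [Finset.card_eq_sum_card_fiberwise (f := fun u ↦ u.2.toNat) (t := Finset.Icc 1 h)]
    · refine Finset.sum_congr rfl fun n hn ↦ congrArg _ ?_
      rw [Finset.mem_Icc] at hn
      rw [Finset.filter_filter]
      refine Finset.filter_congr fun u hu ↦ ?_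
      have := (hpos u hu).1
      omega
    · intro u hu
      obtain ⟨huQ, hu₀⟩ := Finset.mem_filter.mp hu
      obtain ⟨h₁, h₂⟩ := hpos u huQ
      simp only [Finset.coe_Icc, Set.mem_Icc]
      omega
  have hrows : ∑ n ∈ Finset.Icc 1 h, (Q.filter fun u ↦ u.2 = (n : ℤ)).card + coprimeSum h id ≤
      coprimeSum h x + coprimeSum h y := by
    simp only [coprimeSum, ← Finset.sum_add_distrib]
    refine Finset.sum_le_sum fun n hn ↦ ?_
    rw [← card_coprimesIco_add_coprimeCount dvd_rfl (hxy.le_add_add_one n hn)]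
    exact Nat.add_le_add_right (hQ.card_row_le (hrow n hn)) _
  have hzero := hQ.card_filter_snd_eq_zero_le
  have hsplit := Finset.card_filter_add_card_filter_not (s := Q) (fun u : ℤ × ℤ ↦ u.2 = 0)
  omega

/- The maximum of `n f(u) / u.2` over the points `u` of height at least `n` is attained at a real
multiple at most `1` of a point of `Q`, and hence inherits the determinant bounds. -/
theorem exists_isGreatest_ediv {Q : Finset (ℤ × ℤ)} (f : ℤ × ℤ → ℤ) {n : ℤ} (hn : 0 < n)
    (hne : ∃ u ∈ Q, n ≤ u.2) :
    ∃ x : ℤ, (∃ u ∈ Q, n ≤ u.2 ∧ x * u.2 ≤ n * f u) ∧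
      ∀ u ∈ Q, n ≤ u.2 → n * f u < (x + 1) * u.2 := by
  obtain ⟨w, hw, hnw⟩ := hne
  obtain ⟨v, hv, hmax⟩ := Finset.exists_max_image (Q.filter fun u ↦ n ≤ u.2)
    (fun u ↦ n * f u / u.2) ⟨w, Finset.mem_filter.mpr ⟨hw, hnw⟩⟩
  obtain ⟨hvQ, hnv⟩ := Finset.mem_filter.mp hv
  refine ⟨n * f v / v.2, ⟨v, hvQ, hnv, Int.ediv_mul_le _ (by omega)⟩, fun u hu hnu ↦ ?_⟩
  have := hmax u (Finset.mem_filter.mpr ⟨hu, hnu⟩)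
  rw [← Int.ediv_lt_iff_lt_mul (by omega)]
  omega

/-- `b` bounds the values of the linear form `f` on the `n`-th row of `Q`, and is at most the
value of `f` at a real point of height `n` on a segment from the origin to a point of `Q`. -/
structure IsRowMax (Q : Finset (ℤ × ℤ)) (f : ℤ × ℤ → ℤ) (n b : ℕ) : Prop where
  exists_mul_le : ∃ u ∈ Q, (n : ℤ) ≤ u.2 ∧ b * u.2 ≤ n * f u
  lt_mul : ∀ u ∈ Q, (n : ℤ) ≤ u.2 → n * f u < (b + 1) * u.2

namespace IsHeightReduced

variable {k h : ℕ} {t : ℤ} {Q : Finset (ℤ × ℤ)}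

theorem pos (hQ : IsHeightReduced k h t Q) : 0 < h := by
  have := hQ.nonneg.trans_lt hQ.lt
  exact_mod_cast this

theorem exists_isRowMax (hQ : IsHeightReduced k h t Q) {f : ℤ × ℤ → ℤ} (hf : 0 ≤ f (t, h)) {n : ℕ}
    (hn : n ∈ Finset.Icc 1 h) : ∃ b : ℕ, IsRowMax Q f n b := by
  obtain ⟨hn₁, hnh⟩ := Finset.mem_Icc.mp hn
  have hnh' : (n : ℤ) ≤ (t, (h : ℤ)).2 := Nat.cast_le.mpr hnh
  obtain ⟨b, hb, hlt⟩ := exists_isGreatest_ediv f (n := n) (by omega) ⟨_, hQ.mem, hnh'⟩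
  have hpos := (mul_nonneg n.cast_nonneg hf).trans_lt (hlt _ hQ.mem hnh')
  have hb₀ : 0 ≤ b := by
    have := pos_of_mul_pos_left hpos (Nat.cast_nonneg h)
    omega
  lift b to ℕ using hb₀
  exact ⟨b, hb, hlt⟩

theorem isRowBound (hQ : IsHeightReduced k h t Q) {x y : ℕ → ℕ}
    (hx : ∀ n ∈ Finset.Icc 1 h, IsRowMax Q Prod.fst n (x n))
    (hy : ∀ n ∈ Finset.Icc 1 h, IsRowMax Q (fun u ↦ u.2 - u.1) n (y n)) :
    IsRowBound k h x y := by
  refine ⟨fun n hn m hm ↦ ?_, fun n hn ↦ ?_⟩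
  · obtain ⟨u, hu, hnu, hxu⟩ := (hx n hn).exists_mul_le
    obtain ⟨v, hv, hmv, hyv⟩ := (hy m hm).exists_mul_le
    have hdet := (abs_le.mp (hQ.isKNice.abs_planeDet_le hu hv)).2
    rw [planeDet] at hdet
    rw [Finset.mem_Icc] at hn hm
    have hu₀ : 0 < u.2 := by omega
    have hv₀ : 0 < v.2 := by omega
    have hscaled : (m * x n + n * y m - n * m : ℤ) * (u.2 * v.2) ≤ k * (u.2 * v.2) :=
      calc (m * x n + n * y m - n * m : ℤ) * (u.2 * v.2)
          = m * v.2 * (x n * u.2) + n * u.2 * (y m * v.2) - n * m * (u.2 * v.2) := by ring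
        _ ≤ m * v.2 * (n * u.1) + n * u.2 * (m * (v.2 - v.1)) - n * m * (u.2 * v.2) := by gcongr
        _ = n * m * (u.1 * v.2 - v.1 * u.2) := by ring
        _ ≤ u.2 * v.2 * k :=
          mul_le_mul_of_nonneg (mul_le_mul hnu hmv (by omega) hu₀.le) hdet (by positivity)
            (by positivity)
        _ = k * (u.2 * v.2) := by ring
    have := le_of_mul_le_mul_right hscaled (by positivity)
    omega
  · have hnh : (n : ℤ) ≤ h := by exact_mod_cast (Finset.mem_Icc.mp hn).2
    have hxt := (hx n hn).lt_mul _ hQ.mem hnh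
    have hyt := (hy n hn).lt_mul _ hQ.mem hnh
    have : (n * h : ℤ) < (x n + y n + 2) * h := by linarith
    have := lt_of_mul_lt_mul_right this (Nat.cast_nonneg h)
    omega

theorem isTopRow (hQ : IsHeightReduced k h t Q) {s u : ℕ}
    (hs : IsRowMax Q Prod.fst h s) (hu : IsRowMax Q (fun u ↦ u.2 - u.1) h u) :
    IsTopRow h s u := by
  have hh : (0 : ℤ) < h := by exact_mod_cast hQ.pos
  obtain ⟨⟨b, b'⟩, hb, hhb, hsb⟩ := hs.exists_mul_le
  obtain ⟨⟨a, a'⟩, ha, hha, hua⟩ := hu.exists_mul_le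
  obtain rfl : b' = h := (hQ.snd_mem_Icc hb).2.antisymm hhb
  obtain rfl : a' = h := (hQ.snd_mem_Icc ha).2.antisymm hha
  have hsb' := hs.lt_mul _ hb le_rfl
  have hut := hu.lt_mul _ hQ.mem le_rfl
  simp only [mul_comm (h : ℤ), mul_lt_mul_iff_left₀ hh, mul_le_mul_iff_left₀ hh] at hsb hua hsb' hut
  have hta := hQ.le_of_mem a ha
  have htb := hQ.le_of_mem b hb
  have ht := hQ.nonneg
  have ht' := hQ.lt
  obtain rfl : b = s := by omega
  obtain rfl : a = h - u := by omega
  refine ⟨?_, ?_, by omega, Finset.mem_Icc.mpr (by omega)⟩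
  · exact Nat.isCoprime_iff_coprime.mp (hQ.isKNice.isCoprime hb).symm
  · exact Nat.isCoprime_iff_coprime.mp
      ((isCoprime_natCast_sub_left dvd_rfl).mp (hQ.isKNice.isCoprime ha)).symm

end IsHeightReduced

theorem IsKNice.exists_isRowBound {k : ℕ} {Q : Finset (ℤ × ℤ)}
    (hQ : IsKNice k (Q : Set (ℤ × ℤ))) (hcard : 1 < Q.card) :
    ∃ (h : ℕ) (x y : ℕ → ℕ), IsRowBound k h x y ∧ IsTopRow h (x h) (y h) ∧
      3 * h ^ 2 ≤ 4 * k ∧ Q.card + coprimeSum h id ≤ 1 + coprimeSum h x + coprimeSum h y := by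
  obtain ⟨h, t, R, hRQ, hR⟩ := hQ.exists_isHeightReduced hcard
  have hx := fun n hn ↦ hR.exists_isRowMax (f := Prod.fst) hR.nonneg (n := n) hn
  have hy := fun n hn ↦ hR.exists_isRowMax (f := fun u ↦ u.2 - u.1)
    (sub_nonneg.mpr hR.lt.le) (n := n) hn
  choose! x hx using hx
  choose! y hy using hy
  have htop : h ∈ Finset.Icc 1 h := Finset.mem_Icc.mpr ⟨hR.pos, le_rfl⟩
  have hxy := hR.isRowBound hx hy
  refine ⟨h, x, y, hxy, hR.isTopRow (hx h htop) (hy h htop), hR.three_mul_sq_le, ?_⟩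
  rw [← hRQ]
  refine hR.isKNice.card_add_coprimeSum_le (fun u hu ↦ hR.snd_mem_Icc hu) hxy fun n hn u hu hun ↦ ?_
  have hn₀ : (0 : ℤ) < n := by exact_mod_cast (Finset.mem_Icc.mp hn).1
  have hxu := (hx n hn).lt_mul u hu hun.ge
  have hyu := (hy n hn).lt_mul u hu hun.ge
  rw [hun, mul_comm, mul_lt_mul_iff_left₀ hn₀] at hxu hyu
  omega

/-! ### Counting coprime residues -/

theorem coprimeCount_zero (q : ℕ) : coprimeCount q 0 = if q = 1 then 1 else 0 := by
  rw [coprimeCount, Nat.count_succ, Nat.count_zero, zero_add]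
  exact if_congr (Nat.coprime_zero_right q) rfl rfl

theorem coprimeCount_add_self (q x : ℕ) :
    coprimeCount q (x + q) = coprimeCount q x + q.totient := by
  rw [coprimeCount, add_right_comm, add_comm, Nat.count_add, Nat.count_eq_card_filter_range,
    ← Nat.totient, add_comm]
  simp only [Nat.coprime_self_add_right, coprimeCount]

theorem coprimeCount_add_mul_self (q x d : ℕ) :
    coprimeCount q (x + d * q) = coprimeCount q x + d * q.totient := by
  induction d with
  | zero => simp
  | succ d ih => rw [add_mul, one_mul, ← add_assoc, coprimeCount_add_self, ih]; ring

/-- The largest excess, scaled by `q`, of the number of integers in `[0, x]` coprime to `q` over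
its average value `φ(q) x / q`. -/
def discrepancy (q : ℕ) : ℕ :=
  (Finset.range q).sup fun x ↦ q * coprimeCount q x - q.totient * x

theorem mul_coprimeCount_le {q : ℕ} (hq : 0 < q) (x : ℕ) :
    q * coprimeCount q x ≤ q.totient * x + discrepancy q := by
  have hsup : q * coprimeCount q (x % q) - q.totient * (x % q) ≤ discrepancy q :=
    Finset.le_sup (f := fun x ↦ q * coprimeCount q x - q.totient * x)
      (Finset.mem_range.mpr (Nat.mod_lt x hq))
  rw [← Nat.mod_add_div' x q, coprimeCount_add_mul_self]
  calc q * (coprimeCount q (x % q) + x / q * q.totient)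
      = q * coprimeCount q (x % q) + q.totient * (x / q * q) := by ring
    _ ≤ q.totient * (x % q) + discrepancy q + q.totient * (x / q * q) := by gcongr; omega
    _ = q.totient * (x % q + x / q * q) + discrepancy q := by ring

theorem card_coprimesIco_le_of_dvd {q n : ℕ} (hqn : q ∣ n) (a b : ℤ) :
    (coprimesIco n a b).card ≤ (coprimesIco q a b).card := by
  refine Finset.card_le_card fun j hj ↦ ?_
  rw [mem_coprimesIco] at hj ⊢
  exact ⟨hj.1, hj.2.of_isCoprime_of_dvd_right (by exact_mod_cast hqn)⟩

/-- An affine estimate, with slope `δ` and error `e`, for the number of integers coprime to `n` in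
an interval `[n - y, x]`. -/
def IsRowEstimate (n : ℕ) (δ e : ℝ) : Prop :=
  ∀ x y : ℕ, n ≤ x + y + 1 →
    (coprimeCount n x + coprimeCount n y : ℝ) ≤ coprimeCount n n + δ * (x + y - n) + e

theorem isRowEstimate_of_dvd {q n : ℕ} (hn : 0 < n) (hqn : q ∣ n) :
    IsRowEstimate n (q.totient / q) ((2 * discrepancy q - if q = 1 then 1 else 0) / q) := by
  intro x y hxy
  have hq := Nat.pos_of_dvd_of_pos hqn hn
  have hq' : (0 : ℝ) < q := by exact_mod_cast hq
  have hle := card_coprimesIco_le_of_dvd hqn (n - y) (x + 1)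
  have hrow := card_coprimesIco_add_coprimeCount dvd_rfl hxy
  have hrow' := card_coprimesIco_add_coprimeCount hqn hxy
  have hper : q * coprimeCount q n = q.totient * n + if q = 1 then 1 else 0 := by
    obtain ⟨d, rfl⟩ := hqn
    have := coprimeCount_add_mul_self q 0 d
    rw [zero_add, coprimeCount_zero, mul_comm d q] at this
    rw [this]
    split_ifs with h
    · rw [h]; ring
    · ring
  have hx := mul_coprimeCount_le hq x
  have hy := mul_coprimeCount_le hq y
  have hmul : (q * (coprimeCount n x + coprimeCount n y) + q.totient * n +
        (if q = 1 then 1 else 0) : ℝ) ≤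
      q * coprimeCount n n + q.totient * (x + y) + 2 * discrepancy q := by
    exact_mod_cast (by nlinarith : q * (coprimeCount n x + coprimeCount n y) + q.totient * n +
      (if q = 1 then 1 else 0) ≤ q * coprimeCount n n + q.totient * (x + y) + 2 * discrepancy q)
  rw [← mul_le_mul_iff_right₀ hq']
  field_simp
  linarith

/-- The excess of the length of the row `[n - y n, x n]` over the length it has when its ends are
`0` and `n`, relative to `n`. -/
noncomputable def rowExcess (x y : ℕ → ℕ) (n : ℕ) : ℝ := (x n + y n - n) / n

theorem IsRowBound.rowExcess_add_le {k h : ℕ} {x y : ℕ → ℕ} (hxy : IsRowBound k h x y) {n m : ℕ}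
    (hn : n ∈ Finset.Icc 1 h) (hm : m ∈ Finset.Icc 1 h) :
    rowExcess x y n + rowExcess x y m ≤ 2 * k / (n * m) := by
  have hn₀ : (0 : ℝ) < n := by exact_mod_cast (Finset.mem_Icc.mp hn).1
  have hm₀ : (0 : ℝ) < m := by exact_mod_cast (Finset.mem_Icc.mp hm).1
  have hnm : (m * x n + n * y m : ℝ) ≤ k + n * m := by exact_mod_cast hxy.mul_add_mul_le n hn m hm
  have hmn : (n * x m + m * y n : ℝ) ≤ k + m * n := by exact_mod_cast hxy.mul_add_mul_le m hm n hn
  rw [rowExcess, rowExcess, div_add_div _ _ hn₀.ne' hm₀.ne']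
  gcongr
  linarith

theorem IsRowBound.coprimeSum_add_le {k h : ℕ} {x y : ℕ → ℕ} (hxy : IsRowBound k h x y)
    {δ e : ℕ → ℝ} (hrow : ∀ n ∈ Finset.Icc 1 h, IsRowEstimate n (δ n) (e n)) :
    (coprimeSum h x + coprimeSum h y : ℝ) ≤
      coprimeSum h id + ∑ n ∈ Finset.Icc 1 h, (n * δ n * rowExcess x y n + e n) := by
  simp only [coprimeSum, Nat.cast_sum, ← Finset.sum_add_distrib]
  refine Finset.sum_le_sum fun n hn ↦ ?_
  have hn₀ : (n : ℝ) ≠ 0 := Nat.cast_ne_zero.mpr (Nat.ne_of_gt (Finset.mem_Icc.mp hn).1)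
  have := hrow n hn (x n) (y n) (hxy.le_add_add_one n hn)
  rw [rowExcess, show n * δ n * ((x n + y n - n) / n) = δ n * (x n + y n - n) by field_simp]
  simp only [id_eq]
  linarith

/-! ### Weighted sums under a reciprocal coupling -/

/-- The ratio `C(2n, n) / 4 ^ n`: the power series with these coefficients is `(1 - X) ^ (-1 / 2)`,
whence the convolution identity `sum_centralBinomRatio_mul`. -/
noncomputable def centralBinomRatio (n : ℕ) : ℝ := n.centralBinom / 4 ^ n

theorem centralBinomRatio_zero : centralBinomRatio 0 = 1 := by simp [centralBinomRatio]

theorem centralBinomRatio_pos (n : ℕ) : 0 < centralBinomRatio n :=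
  div_pos (by exact_mod_cast n.centralBinom_pos) (by positivity)

theorem succ_mul_centralBinomRatio_succ (n : ℕ) :
    (n + 1) * centralBinomRatio (n + 1) = (n + 1 / 2) * centralBinomRatio n := by
  have := Nat.succ_mul_centralBinom_succ n
  rify at this
  simp only [centralBinomRatio, pow_succ]
  field_simp
  linarith

theorem wallis_mul_centralBinomRatio (n : ℕ) :
    Real.Wallis.W n * (centralBinomRatio n ^ 2 * (2 * n + 1)) = 1 := by
  induction n with
  | zero => simp [centralBinomRatio_zero, Real.Wallis.W]
  | succ n ih =>
    have hsucc : centralBinomRatio (n + 1) = (n + 1 / 2) * centralBinomRatio n / (n + 1) := by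
      rw [← succ_mul_centralBinomRatio_succ, mul_div_cancel_left₀ _ (by positivity)]
    rw [Real.Wallis.W_succ, hsucc]
    refine Eq.trans ?_ ih
    push_cast
    field_simp
    ring

theorem one_le_pi_mul_centralBinomRatio (n : ℕ) :
    1 ≤ Real.pi * centralBinomRatio n ^ 2 * (n + 1) := by
  have hpos : 0 < centralBinomRatio n ^ 2 := pow_pos (centralBinomRatio_pos n) 2
  calc 1 = Real.Wallis.W n * (centralBinomRatio n ^ 2 * (2 * n + 1)) :=
        (wallis_mul_centralBinomRatio n).symm
    _ ≤ Real.pi / 2 * (centralBinomRatio n ^ 2 * (2 * (n + 1))) := by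
        gcongr
        · exact Real.Wallis.W_le n
        · linarith
    _ = Real.pi * centralBinomRatio n ^ 2 * (n + 1) := by ring

theorem two_mul_sum_mul_convolution {R : Type*} [CommRing R] (c : ℕ → R) (N : ℕ) :
    2 * ∑ p ∈ Finset.HasAntidiagonal.antidiagonal N, (p.1 : R) * (c p.1 * c p.2) =
      N * ∑ p ∈ Finset.HasAntidiagonal.antidiagonal N, c p.1 * c p.2 := by
  have hswap : ∑ p ∈ Finset.HasAntidiagonal.antidiagonal N, (p.1 : R) * (c p.1 * c p.2) =
      ∑ p ∈ Finset.HasAntidiagonal.antidiagonal N, (p.2 : R) * (c p.1 * c p.2) := by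
    rw [← Finset.Nat.sum_antidiagonal_swap]
    exact Finset.sum_congr rfl fun p _ ↦ by rw [Prod.fst_swap, Prod.snd_swap, mul_comm (c p.2)]
  rw [two_mul]
  nth_rw 2 [hswap]
  rw [← Finset.sum_add_distrib, Finset.mul_sum]
  refine Finset.sum_congr rfl fun p hp ↦ ?_
  rw [← Finset.HasAntidiagonal.mem_antidiagonal.mp hp, Nat.cast_add, add_mul]

theorem sum_centralBinomRatio_mul (N : ℕ) :
    ∑ p ∈ Finset.HasAntidiagonal.antidiagonal N, centralBinomRatio p.1 * centralBinomRatio p.2 =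
      1 := by
  induction N with
  | zero => simp [centralBinomRatio_zero]
  | succ N ih =>
    have hsym := two_mul_sum_mul_convolution centralBinomRatio (N + 1)
    have hsym' := two_mul_sum_mul_convolution centralBinomRatio N
    have hrec : ∑ p ∈ Finset.HasAntidiagonal.antidiagonal (N + 1),
          (p.1 : ℝ) * (centralBinomRatio p.1 * centralBinomRatio p.2) =
        ∑ p ∈ Finset.HasAntidiagonal.antidiagonal N,
          ((p.1 : ℝ) * (centralBinomRatio p.1 * centralBinomRatio p.2) +
            1 / 2 * (centralBinomRatio p.1 * centralBinomRatio p.2)) := by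
      rw [Finset.Nat.sum_antidiagonal_succ, Nat.cast_zero, zero_mul, zero_add]
      refine Finset.sum_congr rfl fun p _ ↦ ?_
      have := succ_mul_centralBinomRatio_succ p.1
      push_cast
      linear_combination centralBinomRatio p.2 * this
    rw [Finset.sum_add_distrib, ← Finset.mul_sum, ih] at hrec
    rw [ih] at hsym'
    rw [hrec, mul_add, hsym'] at hsym
    refine mul_left_cancel₀ (Nat.cast_add_one_ne_zero N (R := ℝ)) ?_
    push_cast at hsym
    linarith

theorem sum_odd_mul_eq_sum_sqrt {R : Type*} [Ring R] (u : ℕ → R) (h : ℕ) :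
    ∑ n ∈ Finset.Icc 1 h, (2 * (n : R) - 1) * u n = ∑ s ∈ Finset.range (h ^ 2), u (s.sqrt + 1) := by
  induction h with
  | zero => simp
  | succ h ih =>
    have hlast : ∀ i ∈ Finset.range (2 * h + 1), u ((h ^ 2 + i).sqrt + 1) = u (h + 1) :=
      fun i hi ↦ by rw [Nat.sqrt_add_eq' h (by have := Finset.mem_range.mp hi; omega)]
    rw [Finset.sum_Icc_succ_top (by omega), ih, show (h + 1) ^ 2 = h ^ 2 + (2 * h + 1) by ring,
      Finset.sum_range_add, Finset.sum_congr rfl hlast, Finset.sum_const, Finset.card_range,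
      nsmul_eq_mul]
    push_cast
    noncomm_ring

theorem one_le_pi_mul_centralBinomRatio_mul (s t : ℕ) :
    1 ≤ Real.pi * (centralBinomRatio s * centralBinomRatio t) * ((s.sqrt + 1) * (t.sqrt + 1)) := by
  have hsq (s : ℕ) : 1 ≤ Real.pi * centralBinomRatio s ^ 2 * (s.sqrt + 1) ^ 2 := by
    refine (one_le_pi_mul_centralBinomRatio s).trans ?_
    gcongr
    exact_mod_cast Nat.lt_succ_sqrt' s
  have hs := centralBinomRatio_pos s
  have ht := centralBinomRatio_pos t
  refine (one_le_sq_iff₀ (by positivity)).mp ?_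
  calc 1 ≤ (Real.pi * centralBinomRatio s ^ 2 * (s.sqrt + 1) ^ 2) *
        (Real.pi * centralBinomRatio t ^ 2 * (t.sqrt + 1) ^ 2) := one_le_mul_of_one_le_of_one_le
          (hsq s) (hsq t)
    _ = _ := by ring

/- With `s` running over the squares of the rows, the weights `2 n - 1` become constant, and the
substitution pairs `s` with `h ^ 2 - 1 - s`. In the continuous limit `u n` is at most
`k / (n √(h ^ 2 - n ^ 2))`, whose integral against `2 n` is `π k`. -/
theorem sum_odd_mul_le_pi_mul {h : ℕ} (hh : 0 < h) {u : ℕ → ℝ} {k : ℝ} (hk : 0 ≤ k)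
    (hu : ∀ n ∈ Finset.Icc 1 h, ∀ m ∈ Finset.Icc 1 h, u n + u m ≤ 2 * k / (n * m)) :
    ∑ n ∈ Finset.Icc 1 h, (2 * (n : ℝ) - 1) * u n ≤ Real.pi * k := by
  obtain ⟨N, hN⟩ : ∃ N, h ^ 2 = N + 1 := Nat.exists_eq_add_one.mpr (by positivity)
  have hmem {s t : ℕ} (hst : s + t = N) : s.sqrt + 1 ∈ Finset.Icc 1 h := by
    have : s.sqrt < h := Nat.sqrt_lt'.mpr (by omega)
    exact Finset.mem_Icc.mpr ⟨by omega, this⟩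
  have hpair : ∀ p ∈ Finset.HasAntidiagonal.antidiagonal N, u (p.1.sqrt + 1) + u (p.2.sqrt + 1) ≤
      2 * k * Real.pi * (centralBinomRatio p.1 * centralBinomRatio p.2) := fun p hp ↦ by
    have hp := Finset.HasAntidiagonal.mem_antidiagonal.mp hp
    refine (hu _ (hmem hp) _ (hmem (add_comm p.1 _ ▸ hp))).trans ?_
    rw [div_le_iff₀ (by positivity)]
    have := mul_le_mul_of_nonneg_left (one_le_pi_mul_centralBinomRatio_mul p.1 p.2)
      (by positivity : 0 ≤ 2 * k)
    push_cast
    linarith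
  have hsum := Finset.sum_le_sum hpair
  rw [← Finset.mul_sum, sum_centralBinomRatio_mul, Finset.sum_add_distrib,
    Finset.Nat.sum_antidiagonal_eq_sum_range_succ_mk,
    Finset.Nat.sum_antidiagonal_eq_sum_range_succ_mk] at hsum
  have hrefl := Finset.sum_range_reflect (fun s ↦ u (s.sqrt + 1)) (N + 1)
  simp only [Nat.add_sub_cancel] at hrefl
  rw [hrefl] at hsum
  rw [sum_odd_mul_eq_sum_sqrt, hN]
  linarith

theorem sum_mul_le_sum_mul_of_antitoneOn {R : Type*} [CommRing R] [LinearOrder R]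
    [IsStrictOrderedRing R] {h : ℕ} {g f u : ℕ → R}
    (hgf : ∀ n ∈ Finset.Icc 1 h, ∑ i ∈ Finset.Icc 1 n, g i ≤ ∑ i ∈ Finset.Icc 1 n, f i)
    (hu : AntitoneOn u (Set.Icc 1 h)) (hh : 0 ≤ u h) :
    ∑ i ∈ Finset.Icc 1 h, g i * u i ≤ ∑ i ∈ Finset.Icc 1 h, f i * u i := by
  have hparts : ∀ n ≤ h, (∑ i ∈ Finset.Icc 1 n, (f i - g i)) * u n ≤
      ∑ i ∈ Finset.Icc 1 n, (f i - g i) * u i := by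
    intro n
    induction n with
    | zero => simp
    | succ n ih =>
      intro hn
      rw [Finset.sum_Icc_succ_top (by omega), Finset.sum_Icc_succ_top (by omega), add_mul]
      refine add_le_add_left (le_trans ?_ (ih (by omega))) _
      rcases n.eq_zero_or_pos with rfl | hn₀
      · simp
      · refine mul_le_mul_of_nonneg_left (hu ⟨hn₀, by omega⟩ ⟨by omega, hn⟩ n.le_succ) ?_
        rw [Finset.sum_sub_distrib, sub_nonneg]
        exact hgf n (Finset.mem_Icc.mpr ⟨hn₀, by omega⟩)
  rcases h.eq_zero_or_pos with rfl | hh₀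
  · simp
  · have hnonneg := mul_nonneg (sub_nonneg.mpr (hgf h (Finset.mem_Icc.mpr ⟨hh₀, le_rfl⟩))) hh
    rw [← Finset.sum_sub_distrib] at hnonneg
    have := hnonneg.trans (hparts h le_rfl)
    simp only [sub_mul, Finset.sum_sub_distrib] at this
    linarith

theorem exists_antitoneOn_majorant {α : Type*} [LinearOrder α] [Nonempty α] (h : ℕ) (w : ℕ → α) :
    ∃ u : ℕ → α, AntitoneOn u (Set.Icc 1 h) ∧
      ∀ n ∈ Finset.Icc 1 h, w n ≤ u n ∧ ∃ m ∈ Finset.Icc n h, u n = w m := by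
  have hmax : ∀ n ≤ h, ∃ m ∈ Finset.Icc n h, ∀ i ∈ Finset.Icc n h, w i ≤ w m := fun n hn ↦
    Finset.exists_max_image _ w (Finset.nonempty_Icc.mpr hn)
  choose! m hm hle using hmax
  refine ⟨w ∘ m, fun n hn i hi hni ↦ ?_, fun n hn ↦ ?_⟩
  · refine hle n hn.2 _ (Finset.Icc_subset_Icc_left hni (hm i hi.2))
  · have hn := (Finset.mem_Icc.mp hn).2
    exact ⟨hle n hn n (Finset.left_mem_Icc.mpr hn), m n, hm n hn, rfl⟩

theorem exists_antitoneOn_add_le {h : ℕ} {w : ℕ → ℝ} {k : ℝ} (hk : 0 ≤ k)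
    (hw : ∀ n ∈ Finset.Icc 1 h, ∀ m ∈ Finset.Icc 1 h, w n + w m ≤ 2 * k / (n * m)) :
    ∃ u : ℕ → ℝ, AntitoneOn u (Set.Icc 1 h) ∧ (∀ n ∈ Finset.Icc 1 h, w n ≤ u n) ∧
      ∀ n ∈ Finset.Icc 1 h, ∀ m ∈ Finset.Icc 1 h, u n + u m ≤ 2 * k / (n * m) := by
  obtain ⟨u, hanti, hu⟩ := exists_antitoneOn_majorant h w
  refine ⟨u, hanti, fun n hn ↦ (hu n hn).1, fun n hn m hm ↦ ?_⟩
  obtain ⟨i, hi, hui⟩ := (hu n hn).2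
  obtain ⟨j, hj, huj⟩ := (hu m hm).2
  rw [Finset.mem_Icc] at hn hm hi hj
  have hn₀ : (0 : ℝ) < n := by exact_mod_cast hn.1
  have hm₀ : (0 : ℝ) < m := by exact_mod_cast hm.1
  calc u n + u m = w i + w j := by rw [hui, huj]
    _ ≤ 2 * k / (i * j) := hw i (Finset.mem_Icc.mpr ⟨hn.1.trans hi.1, hi.2⟩) j
        (Finset.mem_Icc.mpr ⟨hm.1.trans hj.1, hj.2⟩)
    _ ≤ 2 * k / (n * m) := by
        gcongr
        exacts [hi.1, hj.1]

theorem sum_mul_le_of_add_le {h : ℕ} (hh : 0 < h) {w g : ℕ → ℝ} {k C D : ℝ} (hk : 0 ≤ k)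
    (hC : 0 ≤ C) (hD : 0 ≤ D)
    (hw : ∀ n ∈ Finset.Icc 1 h, ∀ m ∈ Finset.Icc 1 h, w n + w m ≤ 2 * k / (n * m))
    (hwh : 0 ≤ w h) (hg : ∀ n ∈ Finset.Icc 1 h, 0 ≤ g n)
    (hsum : ∀ n ∈ Finset.Icc 1 h, ∑ i ∈ Finset.Icc 1 n, g i ≤ C * n ^ 2 + D * n) :
    ∑ n ∈ Finset.Icc 1 h, g n * w n ≤ C * (Real.pi * k) + D * (2 * k / h * harmonic h) := by
  obtain ⟨u, hanti, hu, hpair⟩ := exists_antitoneOn_add_le hk hw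
  have htop : h ∈ Finset.Icc 1 h := Finset.mem_Icc.mpr ⟨hh, le_rfl⟩
  have huh : 0 ≤ u h := hwh.trans (hu h htop)
  have hlin (n : ℕ) : ∑ i ∈ Finset.Icc 1 n, (C * (2 * i - 1) + D) = C * n ^ 2 + D * n := by
    induction n with
    | zero => simp
    | succ n ih => rw [Finset.sum_Icc_succ_top (by omega), ih]; push_cast; ring
  have hharm : ∑ n ∈ Finset.Icc 1 h, u n ≤ 2 * k / h * harmonic h := by
    rw [harmonic_eq_sum_Icc, Rat.cast_sum, Finset.mul_sum]
    refine Finset.sum_le_sum fun n hn ↦ ?_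
    have := hpair n hn h htop
    rw [mul_comm (n : ℝ), ← div_div, div_eq_mul_inv _ (n : ℝ)] at this
    push_cast
    linarith
  calc ∑ n ∈ Finset.Icc 1 h, g n * w n
      ≤ ∑ n ∈ Finset.Icc 1 h, g n * u n := Finset.sum_le_sum fun n hn ↦
        mul_le_mul_of_nonneg_left (hu n hn) (hg n hn)
    _ ≤ ∑ n ∈ Finset.Icc 1 h, (C * (2 * n - 1) + D) * u n :=
        sum_mul_le_sum_mul_of_antitoneOn (fun n hn ↦ (hsum n hn).trans (hlin n).ge) hanti huh
    _ = C * ∑ n ∈ Finset.Icc 1 h, (2 * (n : ℝ) - 1) * u n + D * ∑ n ∈ Finset.Icc 1 h, u n := by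
        rw [Finset.mul_sum, Finset.mul_sum, ← Finset.sum_add_distrib]
        exact Finset.sum_congr rfl fun n _ ↦ by ring
    _ ≤ C * (Real.pi * k) + D * (2 * k / h * harmonic h) := by
        gcongr
        exact sum_odd_mul_le_pi_mul hh hk hpair

/-! ### Mean densities -/

/-- The proportion of integers that are prime to every common prime factor of `n` and `S`. -/
noncomputable def density (S : Finset ℕ) (n : ℕ) : ℝ :=
  ∏ p ∈ S, if p ∣ n then 1 - (p : ℝ)⁻¹ else 1

theorem totient_gcd_div_gcd {n P : ℕ} (hn : n ≠ 0) (hP : P ≠ 0) :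
    ((n.gcd P).totient / n.gcd P : ℝ) = density P.primeFactors n := by
  have htot : ((n.gcd P).totient : ℝ) =
      n.gcd P * ∏ p ∈ (n.gcd P).primeFactors, (1 - (p : ℝ)⁻¹) := by
    simpa using congrArg (Rat.cast (K := ℝ)) (Nat.totient_eq_mul_prod_factors (n.gcd P))
  rw [htot, mul_div_cancel_left₀ _ (Nat.cast_ne_zero.mpr (Nat.gcd_ne_zero_left hn)), density,
    ← Finset.prod_filter, Nat.primeFactors_gcd hn hP]
  refine Finset.prod_congr (Finset.ext fun p ↦ ?_) fun _ _ ↦ rfl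
  simp only [Finset.mem_inter, Finset.mem_filter, Nat.mem_primeFactors]
  tauto

theorem density_nonneg {S : Finset ℕ} (hS : ∀ p ∈ S, p.Prime) (n : ℕ) : 0 ≤ density S n :=
  Finset.prod_nonneg fun p hp ↦ by
    have : (p : ℝ)⁻¹ ≤ 1 := inv_le_one_of_one_le₀ (by exact_mod_cast (hS p hp).one_le)
    split_ifs <;> linarith

theorem density_prime_mul {S : Finset ℕ} (hS : ∀ p ∈ S, p.Prime) {p : ℕ} (hp : p.Prime)
    (hpS : p ∉ S) (n : ℕ) : density S (p * n) = density S n := by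
  refine Finset.prod_congr rfl fun r hr ↦ ?_
  have hrp : r.Coprime p := (Nat.coprime_primes (hS r hr) hp).mpr fun h ↦ hpS (h ▸ hr)
  exact if_congr hrp.dvd_mul_left rfl rfl

/-- The sum of `n * density S n` over the integers `1 ≤ n ≤ x`. -/
noncomputable def densitySum (S : Finset ℕ) (x : ℝ) : ℝ :=
  ∑ n ∈ Finset.Icc 1 ⌊x⌋₊, n * density S n

theorem densitySum_empty (x : ℝ) : densitySum ∅ x = ⌊x⌋₊ * (⌊x⌋₊ + 1) / 2 := by
  simp only [densitySum, density, Finset.prod_empty, mul_one]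
  induction ⌊x⌋₊ with
  | zero => simp
  | succ n ih => rw [Finset.sum_Icc_succ_top (by omega), ih]; push_cast; ring

theorem densitySum_insert {S : Finset ℕ} (hS : ∀ p ∈ S, p.Prime) {p : ℕ} (hp : p.Prime)
    (hpS : p ∉ S) (x : ℝ) :
    densitySum (insert p S) x = densitySum S x - densitySum S (x / p) := by
  have hp₀ : (p : ℝ) ≠ 0 := Nat.cast_ne_zero.mpr hp.ne_zero
  have hmul : densitySum S (x / p) =
      ∑ n ∈ Finset.Icc 1 ⌊x⌋₊ with p ∣ n, (p : ℝ)⁻¹ * (n * density S n) := by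
    rw [densitySum, Nat.floor_div_natCast]
    refine Finset.sum_nbij' (p * ·) (· / p) ?_ ?_ ?_ ?_ ?_
    · intro n hn
      rw [Finset.mem_Icc, Nat.le_div_iff_mul_le hp.pos, mul_comm] at hn
      simp [hn.2, Nat.mul_pos hp.pos hn.1, Nat.succ_le_iff]
    · intro n hn
      obtain ⟨hn, m, rfl⟩ := Finset.mem_filter.mp hn
      rw [Finset.mem_Icc] at hn ⊢
      rw [Nat.mul_div_cancel_left m hp.pos, Nat.le_div_iff_mul_le hp.pos, mul_comm m]
      exact ⟨Nat.pos_of_mul_pos_left hn.1, hn.2⟩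
    · exact fun n _ ↦ Nat.mul_div_cancel_left n hp.pos
    · exact fun n hn ↦ Nat.mul_div_cancel' (Finset.mem_filter.mp hn).2
    · intro n _
      rw [density_prime_mul hS hp hpS]
      push_cast
      field_simp
  rw [hmul, densitySum, densitySum, Finset.sum_filter, ← Finset.sum_sub_distrib]
  refine Finset.sum_congr rfl fun n _ ↦ ?_
  rw [density, Finset.prod_insert hpS, ← density]
  split_ifs <;> ring

theorem abs_densitySum_sub_le {S : Finset ℕ} (hS : ∀ p ∈ S, p.Prime) {x : ℝ} (hx : 0 ≤ x) :
    |densitySum S x - (∏ p ∈ S, (1 - ((p : ℝ) ^ 2)⁻¹)) * (x ^ 2 / 2)| ≤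
      (∏ p ∈ S, (1 + (p : ℝ)⁻¹)) * (x / 2) := by
  induction S using Finset.induction_on generalizing x with
  | empty =>
    have h₁ := Nat.floor_le hx
    have h₂ := Nat.lt_floor_add_one x
    rw [densitySum_empty, Finset.prod_empty, Finset.prod_empty, abs_le]
    constructor <;> nlinarith
  | insert p S hpS ih =>
    have hS' : ∀ q ∈ S, q.Prime := fun q hq ↦ hS q (Finset.mem_insert_of_mem hq)
    have hp := hS p (Finset.mem_insert_self p S)
    rw [densitySum_insert hS' hp hpS, Finset.prod_insert hpS, Finset.prod_insert hpS]
    set A := ∏ p ∈ S, (1 - ((p : ℝ) ^ 2)⁻¹)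
    set B := ∏ p ∈ S, (1 + (p : ℝ)⁻¹)
    calc |densitySum S x - densitySum S (x / p) - (1 - ((p : ℝ) ^ 2)⁻¹) * A * (x ^ 2 / 2)|
        = |densitySum S x - A * (x ^ 2 / 2) -
            (densitySum S (x / p) - A * ((x / p) ^ 2 / 2))| := by congr 1; ring
      _ ≤ B * (x / 2) + B * (x / p / 2) :=
          (abs_sub _ _).trans (add_le_add (ih hS' hx) (ih hS' (by positivity)))
      _ = (1 + (p : ℝ)⁻¹) * B * (x / 2) := by ring

theorem primeFactors_2310 : Nat.primeFactors 2310 = {2, 3, 5, 7, 11} := by decide +kernel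

/-! ### Computing discrepancies -/

/-- The value `f x`, in a form whose evaluation in the kernel starts by reducing `x` to a numeral;
without it the loops below would substitute unevaluated terms. -/
def force {α : Type} (x : ℕ) (f : ℕ → α) : α :=
  x.rec (f 0) fun m _ ↦ f m.succ

@[simp]
theorem force_eq {α : Type} (x : ℕ) (f : ℕ → α) : force x f = f x := by
  cases x <;> rfl

/-- The maximum of `E` and the values of `q * coprimeCount q t - φ * t` over `t < x`, where `c` is
the number of integers below `x` coprime to `q`. -/
def maxExcess (q φ : ℕ) : (x c E : ℕ) → ℕ
  | 0, _, E => E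
  | x + 1, c, E =>
    force (max E (q * c - φ * x)) fun E ↦
      force (if q.Coprime x then c - 1 else c) fun c ↦ maxExcess q φ x c E

theorem maxExcess_eq (q φ x E : ℕ) :
    maxExcess q φ x (Nat.count q.Coprime x) E =
      max E ((Finset.range x).sup fun t ↦ q * coprimeCount q t - φ * t) := by
  induction x generalizing E with
  | zero => simp [maxExcess]
  | succ x ih =>
    have hcount : (if q.Coprime x then Nat.count q.Coprime (x + 1) - 1
        else Nat.count q.Coprime (x + 1)) = Nat.count q.Coprime x := by
      rw [Nat.count_succ]
      split_ifs <;> rfl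
    rw [maxExcess, force_eq, force_eq, hcount, ih, Finset.range_add_one, Finset.sup_insert,
      coprimeCount, max_assoc]

theorem count_coprime_self (q : ℕ) : Nat.count q.Coprime q = q.totient := by
  rw [Nat.count_eq_card_filter_range, Nat.totient]

theorem maxExcess_totient (q : ℕ) : maxExcess q q.totient q q.totient 0 = discrepancy q := by
  have := maxExcess_eq q q.totient q 0
  rwa [count_coprime_self, Nat.zero_max] at this

theorem discrepancy_le_of_dvd {q : ℕ} (hq : q ∣ 2310) : 77 * discrepancy q ≤ 194 * q := by
  have hcheck : ∀ q ∈ Nat.divisors 2310,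
      (force (Nat.count q.Coprime q) fun φ ↦ 77 * maxExcess q φ q φ 0) ≤ 194 * q := by
    decide +kernel
  simpa only [force_eq, count_coprime_self, maxExcess_totient] using
    hcheck q (Nat.mem_divisors.mpr ⟨hq, by norm_num⟩)

/-! ### Large heights -/

theorem harmonic_le_add_div {n : ℕ} (hn : 0 < n) : (harmonic n : ℝ) ≤ 6.9315 + n / 1024 := by
  have hn' : (0 : ℝ) < n := Nat.cast_pos.mpr hn
  have hlog : Real.log n = Real.log (n / 1024) + 10 * Real.log 2 := by
    rw [Real.log_div hn'.ne' (by norm_num), show (1024 : ℝ) = 2 ^ 10 by norm_num, Real.log_pow]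
    ring
  have := Real.log_le_sub_one_of_pos (show (0 : ℝ) < n / 1024 by positivity)
  linarith [harmonic_le_one_add_log n, Real.log_two_lt_d9]

theorem sum_mul_density_2310_le (n : ℕ) :
    ∑ i ∈ Finset.Icc 1 n, i * density (Nat.primeFactors 2310) i ≤ 0.3109 * n ^ 2 + 1.4962 * n := by
  have h := (abs_le.mp (abs_densitySum_sub_le (S := Nat.primeFactors 2310)
    (fun p hp ↦ Nat.prime_of_mem_primeFactors hp) n.cast_nonneg)).2
  rw [densitySum, Nat.floor_natCast] at h
  have hmain : ∏ p ∈ Nat.primeFactors 2310, (1 - ((p : ℝ) ^ 2)⁻¹) ≤ 0.6218 := by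
    rw [primeFactors_2310]; norm_num
  have herror : ∏ p ∈ Nat.primeFactors 2310, (1 + (p : ℝ)⁻¹) ≤ 2.9924 := by
    rw [primeFactors_2310]; norm_num
  linarith [mul_le_mul_of_nonneg_right hmain (show 0 ≤ (n : ℝ) ^ 2 / 2 by positivity),
    mul_le_mul_of_nonneg_right herror (show 0 ≤ (n : ℝ) / 2 by positivity)]

theorem isRowEstimate_density {n : ℕ} (hn : 0 < n) :
    IsRowEstimate n (density (Nat.primeFactors 2310) n) (388 / 77) := by
  have hq : 0 < n.gcd 2310 := Nat.gcd_pos_of_pos_left _ hn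
  have hdisc : (77 * discrepancy (n.gcd 2310) : ℝ) ≤ 194 * n.gcd 2310 := by
    exact_mod_cast discrepancy_le_of_dvd (n.gcd_dvd_right 2310)
  intro x y hxy
  rw [← totient_gcd_div_gcd hn.ne' (by norm_num)]
  refine (isRowEstimate_of_dvd hn (n.gcd_dvd_left 2310) x y hxy).trans ?_
  refine add_le_add_right ?_ _
  rw [div_le_div_iff₀ (by exact_mod_cast hq) (by norm_num)]
  split_ifs <;> linarith

theorem IsTopRow.rowExcess_nonneg {h : ℕ} {x y : ℕ → ℕ} (htop : IsTopRow h (x h) (y h)) :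
    0 ≤ rowExcess x y h := by
  have : (h : ℝ) ≤ x h + y h := by exact_mod_cast htop.le_add
  exact div_nonneg (by linarith) h.cast_nonneg

theorem IsRowBound.coprimeSum_add_le_of_large {k h : ℕ} {x y : ℕ → ℕ} (hxy : IsRowBound k h x y)
    (htop : IsTopRow h (x h) (y h)) (hk : 3 * h ^ 2 ≤ 4 * k) (hh : 1362 ≤ h) :
    coprimeSum h x + coprimeSum h y ≤ coprimeSum h id + k := by
  set ρ := density (Nat.primeFactors 2310)
  have hh' : (1362 : ℝ) ≤ h := by exact_mod_cast hh
  have hk' : (3 * h ^ 2 : ℝ) ≤ 4 * k := by exact_mod_cast hk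
  have hsum := hxy.coprimeSum_add_le (δ := ρ) (e := fun _ ↦ 388 / 77)
    fun n hn ↦ isRowEstimate_density (Finset.mem_Icc.mp hn).1
  have hweighted := sum_mul_le_of_add_le (by omega) k.cast_nonneg (by norm_num) (by norm_num)
    (fun n hn m hm ↦ hxy.rowExcess_add_le hn hm) htop.rowExcess_nonneg
    (g := fun n ↦ n * ρ n)
    (fun n _ ↦ mul_nonneg n.cast_nonneg
      (density_nonneg (fun p hp ↦ Nat.prime_of_mem_primeFactors hp) n))
    fun n _ ↦ sum_mul_density_2310_le n
  rw [Finset.sum_add_distrib, Finset.sum_const, Nat.card_Icc, Nat.add_sub_cancel,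
    nsmul_eq_mul] at hsum
  have hpi : 0.3109 * (Real.pi * k) ≤ 0.97673 * (k : ℝ) := by
    nlinarith [Real.pi_lt_d6, (Nat.cast_nonneg k : (0 : ℝ) ≤ k)]
  have hharm : 1.4962 * (2 * k / h * (harmonic h : ℝ)) + 388 / 77 * h ≤ 0.02327 * (k : ℝ) := by
    have hz : (h : ℝ) ≤ 4 / 3 * (k / h) := by field_simp; linarith
    calc 1.4962 * (2 * k / h * (harmonic h : ℝ)) + 388 / 77 * h
        ≤ 1.4962 * (2 * k / h * (6.9315 + h / 1024)) + 388 / 77 * (4 / 3 * (k / h)) := by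
          gcongr
          exact harmonic_le_add_div (by omega)
      _ = (2.9924 * (6.9315 + h / 1024) + 388 / 77 * (4 / 3)) * (k / h) := by ring
      _ ≤ (0.02327 * h) * (k / h) := by gcongr; linarith
      _ = 0.02327 * k := by field_simp
  exact_mod_cast (by linarith : (coprimeSum h x + coprimeSum h y : ℝ) ≤ coprimeSum h id + k)

/-! ### Pairing off weights -/

/-- The common denominator to which the numerical bounds below are rounded up. -/
def roundingScale : ℕ := 720720000

/-- Distributes the weight `a`, located at `i`, over a list of pairs (location, weight), adds the
rounded cost `b / (i * j)` of each portion `b` placed at `j` to `C`, and hands the remaining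
list over to `f`. -/
def distributionCost (f : List (ℕ × ℕ) → ℕ → ℕ) (i : ℕ) : List (ℕ × ℕ) → (a C : ℕ) → ℕ
  | [], _, C => C
  | (j, b) :: l, a, C =>
    if a ≤ b then
      force (C + (roundingScale * a) ⌈/⌉ (i * j)) fun C ↦ force (b - a) fun b ↦ f ((j, b) :: l) C
    else
      force (C + (roundingScale * b) ⌈/⌉ (i * j)) fun C ↦
        force (a - b) fun a ↦ distributionCost f i l a C

/-- `C` plus the rounded cost of the coupling of two lists of pairs (location, weight) that matches
their weights greedily in the given order. -/
def couplingCost : List (ℕ × ℕ) → List (ℕ × ℕ) → (C : ℕ) → ℕ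
  | [], _, C => C
  | (i, a) :: l, l', C => distributionCost (couplingCost l) i l' a C

/-- The total weight of a list of pairs (location, weight). -/
def totalWeight (l : List (ℕ × ℕ)) : ℕ := (l.map Prod.snd).sum

/-- The sum of a function on the locations against the weights. -/
def weightedSum (w : ℕ → ℝ) (l : List (ℕ × ℕ)) : ℝ := (l.map fun p ↦ p.2 * w p.1).sum

theorem weightedSum_eq_zero {l : List (ℕ × ℕ)} (hl : totalWeight l = 0) (w : ℕ → ℝ) :
    weightedSum w l = 0 := by
  refine List.sum_eq_zero fun r hr ↦ ?_
  obtain ⟨p, hp, rfl⟩ := List.mem_map.mp hr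
  rw [List.sum_eq_zero_iff.mp hl _ (List.mem_map_of_mem hp), Nat.cast_zero, zero_mul]

section Coupling

variable {h : ℕ} {K : ℝ} {w : ℕ → ℝ}

theorem mul_add_le_mul_ceilDiv (hK : 0 ≤ K) {i j : ℕ} (hi : 0 < i) (hj : 0 < j)
    (hw : w i + w j ≤ K / (i * j)) (a : ℕ) :
    roundingScale * (a * (w i + w j)) ≤ K * ((roundingScale * a) ⌈/⌉ (i * j) : ℕ) := by
  have : (0 : ℝ) < i * j := by exact_mod_cast Nat.mul_pos hi hj
  have hceil : (roundingScale * a : ℝ) ≤ i * j * ((roundingScale * a) ⌈/⌉ (i * j) : ℕ) := by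
    exact_mod_cast le_smul_ceilDiv (Nat.mul_pos hi hj)
  calc roundingScale * (a * (w i + w j))
      ≤ roundingScale * (a * (K / (i * j))) := by gcongr
    _ = K / (i * j) * (roundingScale * a) := by ring
    _ ≤ K / (i * j) * (i * j * ((roundingScale * a) ⌈/⌉ (i * j) : ℕ)) := by gcongr
    _ = K * ((roundingScale * a) ⌈/⌉ (i * j) : ℕ) := by field_simp

variable (hK : 0 ≤ K)
  (hw : ∀ i ∈ Finset.Icc 1 h, ∀ j ∈ Finset.Icc 1 h, w i + w j ≤ K / (i * j))
include hK hw

theorem le_mul_distributionCost {f : List (ℕ × ℕ) → ℕ → ℕ} {T : ℕ} {W : ℝ}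
    (hf : ∀ l C, (∀ p ∈ l, p.1 ∈ Finset.Icc 1 h) → totalWeight l = T →
      roundingScale * (W + weightedSum w l) + K * C ≤ K * f l C)
    {i : ℕ} (hi : i ∈ Finset.Icc 1 h) (hT : T = 0 → W = 0) {l : List (ℕ × ℕ)}
    (hl : ∀ p ∈ l, p.1 ∈ Finset.Icc 1 h) {a : ℕ} (ha : totalWeight l = a + T) (C : ℕ) :
    roundingScale * (a * w i + W + weightedSum w l) + K * C ≤ K * distributionCost f i l a C := by
  induction l generalizing a C with
  | nil =>
    obtain ⟨rfl, hT'⟩ : a = 0 ∧ T = 0 := by rw [totalWeight] at ha; simp at ha; omega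
    simp [distributionCost, weightedSum, hT hT']
  | cons p l ih =>
    obtain ⟨j, b⟩ := p
    have hj : j ∈ Finset.Icc 1 h := hl _ List.mem_cons_self
    have hl' := fun p hp ↦ hl p (List.mem_cons_of_mem _ hp)
    have hcost := mul_add_le_mul_ceilDiv hK (Finset.mem_Icc.mp hi).1 (Finset.mem_Icc.mp hj).1
      (hw i hi j hj)
    simp only [totalWeight, weightedSum, List.map_cons, List.sum_cons] at ha hf ih ⊢
    rw [distributionCost]
    split_ifs with hab
    · have := hcost a
      have hrest := hf ((j, b - a) :: l) (C + (roundingScale * a) ⌈/⌉ (i * j))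
        (List.forall_mem_cons.mpr ⟨hj, hl'⟩) (by simp; omega)
      simp only [force_eq, List.map_cons, List.sum_cons] at hrest ⊢
      push_cast [hab] at hrest
      linarith
    · have := hcost b
      have hrest := ih hl' (a := a - b) (by omega) (C + (roundingScale * b) ⌈/⌉ (i * j))
      simp only [force_eq]
      push_cast [le_of_not_ge hab] at hrest
      linarith

theorem le_mul_couplingCost {l l' : List (ℕ × ℕ)} (hl : ∀ p ∈ l, p.1 ∈ Finset.Icc 1 h)
    (hl' : ∀ p ∈ l', p.1 ∈ Finset.Icc 1 h) (htotal : totalWeight l' = totalWeight l) (C : ℕ) :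
    roundingScale * (weightedSum w l + weightedSum w l') + K * C ≤ K * couplingCost l l' C := by
  induction l generalizing l' C with
  | nil => simp [couplingCost, weightedSum_eq_zero htotal, weightedSum_eq_zero (l := []) rfl]
  | cons p l ih =>
    rw [weightedSum, List.map_cons, List.sum_cons, couplingCost]
    exact le_mul_distributionCost hK hw
      (fun l' C hl' hT ↦ ih (fun p hp ↦ hl p (List.mem_cons_of_mem _ hp)) hl' hT C)
      (hl p List.mem_cons_self) (fun h ↦ weightedSum_eq_zero h w) hl' htotal C

end Coupling

/-! ### Heights up to `1361` -/

/-- For heights `5 ≤ h ≤ 49`, the least `k` from which on the row estimates of this section suffice;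
the values of `k` below it are settled by the search over staircases. -/
def staircaseBound (h : ℕ) : ℕ :=
  [1, 1, 1, 1, 1, 113, 69, 161, 159, 207, 192, 304, 278, 404, 412, 418, 392, 506, 489, 619, 629,
    653, 643, 756, 746, 801, 820, 849, 845, 958, 955, 1057, 1084, 1141, 1156, 1210, 1187, 1271,
    1302, 1353, 1345, 1443, 1454, 1556, 1591, 1614, 1619, 1732, 1732, 1810].getD h 0

/-- The divisor of `n` modulo which row `n` is estimated. -/
def rowModulus (n : ℕ) : ℕ := if n ≤ 120 then n else n.gcd 2310

/-- The slope of the estimate for row `n`, as a function of the relative excess. -/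
def rowWeight (n : ℕ) : ℕ := (rowModulus n).totient * (n / rowModulus n)

/-- The error of the estimate for row `n`, rounded up to a multiple of `1 / roundingScale`. -/
def roundedRowError (n : ℕ) : ℕ :=
  (roundingScale * (2 * discrepancy (rowModulus n) - if rowModulus n = 1 then 1 else 0)) ⌈/⌉
    rowModulus n

/-- Computes `f (rowWeight n) (roundedRowError n)`. -/
def withRowEstimate {α : Type} (n : ℕ) (f : ℕ → ℕ → α) : α :=
  force (rowModulus n) fun q ↦ force (Nat.count q.Coprime q) fun φ ↦ force (φ * (n / q)) fun g ↦
    force ((roundingScale * (2 * maxExcess q φ q φ 0 - if q = 1 then 1 else 0)) ⌈/⌉ q) fun e ↦ f g e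

theorem withRowEstimate_eq {α : Type} (n : ℕ) (f : ℕ → ℕ → α) :
    withRowEstimate n f = f (rowWeight n) (roundedRowError n) := by
  simp only [withRowEstimate, force_eq, count_coprime_self, maxExcess_totient]
  rfl

/-- The last height treated together with the height `h`. -/
def blockEnd (h : ℕ) : ℕ := h + (h - 25) / 50

/-- Whether the estimates for the rows `1, …, h₂`, with weights `l` and total error `E`, suffice at
all heights from `h₁` to `h₂`. -/
def blockCheck (h₁ h₂ : ℕ) (l : List (ℕ × ℕ)) (E : ℕ) : Bool :=
  force (couplingCost l.reverse l 0) fun C ↦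
    h₂ * C ≤ roundingScale * h₁ ∧
      E * h₁ < 5 * roundingScale * h₁ +
        max (staircaseBound h₁) (3 * h₁ ^ 2 ⌈/⌉ 4) * (roundingScale * h₁ - h₂ * C)

/-- Runs the block checks for the heights from `h₁` to `n + f`, where `l` and `E` are the weights
and the total error of the rows up to `n`. -/
def linearScan : (f n : ℕ) → (l : List (ℕ × ℕ)) → (E h₁ : ℕ) → Bool
  | 0, n, _, _, h₁ => h₁ = n + 1
  | f + 1, n, l, E, h₁ =>
    force (n + 1) fun n ↦ withRowEstimate n fun g e ↦ force (E + e) fun E ↦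
      if n = blockEnd h₁ then
        blockCheck h₁ n ((n, g) :: l) E && linearScan f n ((n, g) :: l) E (n + 1)
      else linearScan f n ((n, g) :: l) E h₁

/-- The weights of the rows up to `n`, in descending order. -/
def rowWeights : ℕ → List (ℕ × ℕ)
  | 0 => []
  | n + 1 => (n + 1, rowWeight (n + 1)) :: rowWeights n

theorem rowWeights_succ (n : ℕ) :
    rowWeights (n + 1) = (n + 1, rowWeight (n + 1)) :: rowWeights n := rfl

theorem fst_mem_of_mem_rowWeights {n : ℕ} : ∀ p ∈ rowWeights n, p.1 ∈ Finset.Icc 1 n := by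
  induction n with
  | zero => simp [rowWeights]
  | succ n ih =>
    simp only [rowWeights, List.mem_cons, Finset.mem_Icc] at ih ⊢
    rintro p (rfl | hp)
    · omega
    · have := ih p hp
      omega

theorem weightedSum_rowWeights (w : ℕ → ℝ) (n : ℕ) :
    weightedSum w (rowWeights n) = ∑ i ∈ Finset.Icc 1 n, rowWeight i * w i := by
  induction n with
  | zero => simp [rowWeights, weightedSum]
  | succ n ih =>
    rw [Finset.sum_Icc_succ_top (by omega), ← ih]
    exact add_comm _ _

theorem extendByZero_add_extendByZero_le {k h n : ℕ} {w : ℕ → ℝ} (hh : 0 < h) (hhn : h ≤ n)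
    (hw : ∀ i ∈ Finset.Icc 1 h, ∀ j ∈ Finset.Icc 1 h, w i + w j ≤ 2 * k / (i * j))
    (hwh : 0 ≤ w h) {i j : ℕ} (hi : i ∈ Finset.Icc 1 n) (hj : j ∈ Finset.Icc 1 n) :
    ((if i ≤ h then w i else 0) + if j ≤ h then w j else 0) ≤ 2 * k * (n / h) / (i * j) := by
  obtain ⟨hi₁, hin⟩ := Finset.mem_Icc.mp hi
  obtain ⟨hj₁, hjn⟩ := Finset.mem_Icc.mp hj
  have htop : h ∈ Finset.Icc 1 h := Finset.mem_Icc.mpr ⟨hh, le_rfl⟩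
  have hh₀ : (0 : ℝ) < h := by exact_mod_cast hh
  have hi₀ : (0 : ℝ) < i := by exact_mod_cast hi₁
  have hj₀ : (0 : ℝ) < j := by exact_mod_cast hj₁
  have hone : ∀ m ∈ Finset.Icc 1 h, ∀ l : ℕ, 0 < (l : ℝ) → l ≤ n →
      w m ≤ 2 * k * (n / h) / (m * l) := fun m hm l hl hln ↦ by
    have hm₀ : (0 : ℝ) < m := by exact_mod_cast (Finset.mem_Icc.mp hm).1
    have hln' : (l : ℝ) ≤ n := by exact_mod_cast hln
    calc w m ≤ w m + w h := by linarith
      _ ≤ 2 * k / (m * h) := hw m hm h htop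
      _ = 2 * k * (l / h) / (m * l) := by field_simp
      _ ≤ 2 * k * (n / h) / (m * l) := by gcongr
  split_ifs with hih hjh hjh
  · have hscale : (1 : ℝ) ≤ n / h := by rw [one_le_div hh₀]; exact_mod_cast hhn
    refine (hw i (Finset.mem_Icc.mpr ⟨hi₁, hih⟩) j (Finset.mem_Icc.mpr ⟨hj₁, hjh⟩)).trans ?_
    gcongr ?_ / _
    exact le_mul_of_one_le_right (by positivity) hscale
  · rw [add_zero]
    exact hone i (Finset.mem_Icc.mpr ⟨hi₁, hih⟩) j hj₀ hjn
  · rw [zero_add, mul_comm (i : ℝ)]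
    exact hone j (Finset.mem_Icc.mpr ⟨hj₁, hjh⟩) i hi₀ hin
  · rw [add_zero]
    positivity

theorem sum_rowWeight_mul_le {n : ℕ} {K : ℝ} (hK : 0 ≤ K) {w : ℕ → ℝ}
    (hw : ∀ i ∈ Finset.Icc 1 n, ∀ j ∈ Finset.Icc 1 n, w i + w j ≤ K / (i * j)) :
    2 * roundingScale * ∑ i ∈ Finset.Icc 1 n, rowWeight i * w i ≤
      K * couplingCost (rowWeights n).reverse (rowWeights n) 0 := by
  have := le_mul_couplingCost hK hw
    (fun p hp ↦ fst_mem_of_mem_rowWeights p (List.mem_reverse.mp hp))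
    fst_mem_of_mem_rowWeights (by simp [totalWeight, List.sum_reverse]) 0
  rw [show weightedSum w (rowWeights n).reverse = weightedSum w (rowWeights n) by
    simp [weightedSum, List.sum_reverse], weightedSum_rowWeights] at this
  push_cast at this
  linarith

section Block

variable {k h : ℕ} {w : ℕ → ℝ} (hh : 0 < h)
  (hw : ∀ i ∈ Finset.Icc 1 h, ∀ j ∈ Finset.Icc 1 h, w i + w j ≤ 2 * k / (i * j)) (hwh : 0 ≤ w h)
include hh hw hwh

theorem sum_rowWeight_mul_mul_le {n : ℕ} (hhn : h ≤ n) :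
    roundingScale * (∑ i ∈ Finset.Icc 1 h, rowWeight i * w i) * h ≤
      k * (n * couplingCost (rowWeights n).reverse (rowWeights n) 0) := by
  have hh₀ : (0 : ℝ) < h := by exact_mod_cast hh
  have hext : ∑ i ∈ Finset.Icc 1 n, rowWeight i * (if i ≤ h then w i else 0) =
      ∑ i ∈ Finset.Icc 1 h, rowWeight i * w i := by
    refine (Finset.sum_subset_zero_on_sdiff (Finset.Icc_subset_Icc_right hhn)
      (fun i hi ↦ ?_) fun i hi ↦ ?_).symm
    · simp_all
    · rw [if_pos (Finset.mem_Icc.mp hi).2]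
  have := sum_rowWeight_mul_le (by positivity)
    fun i hi j hj ↦ extendByZero_add_extendByZero_le hh hhn hw hwh hi hj
  rw [hext] at this
  have := mul_le_mul_of_nonneg_right this hh₀.le
  field_simp at this
  linarith

theorem sum_rowWeight_mul_add_lt_of_blockCheck {h₁ h₂ : ℕ} (hh₁ : 0 < h₁)
    (hcheck : blockCheck h₁ h₂ (rowWeights h₂) (∑ n ∈ Finset.Icc 1 h₂, roundedRowError n) = true)
    (hhh₁ : h₁ ≤ h) (hhh₂ : h ≤ h₂) (hk : max (staircaseBound h₁) (3 * h₁ ^ 2 ⌈/⌉ 4) ≤ k) :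
    ∑ n ∈ Finset.Icc 1 h, (roundingScale * (rowWeight n * w n) + roundedRowError n) <
      roundingScale * (k + 5) := by
  have hmain := sum_rowWeight_mul_mul_le hh hw hwh hhh₂
  set C := couplingCost (rowWeights h₂).reverse (rowWeights h₂) 0
  set E := ∑ n ∈ Finset.Icc 1 h₂, roundedRowError n
  rw [blockCheck, force_eq, decide_eq_true_iff] at hcheck
  obtain ⟨hC, hE⟩ := hcheck
  have herror : (∑ n ∈ Finset.Icc 1 h, roundedRowError n : ℝ) ≤ E := by
    exact_mod_cast Finset.sum_le_sum_of_subset (Finset.Icc_subset_Icc_right hhh₂)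
  have hgain : (E * h₁ + k * (h₂ * C) : ℝ) < (k + 5) * roundingScale * h₁ := by
    have := hE.trans_le (Nat.add_le_add_left (Nat.mul_le_mul_right _ hk) _)
    zify [hC] at this
    exact_mod_cast (by linarith : (E * h₁ + k * (h₂ * C) : ℤ) < (k + 5) * roundingScale * h₁)
  have hE' : (E : ℝ) ≤ (k + 5) * roundingScale := by
    refine le_of_mul_le_mul_right (a := (h₁ : ℝ)) ?_ (by exact_mod_cast hh₁)
    have : (0 : ℝ) ≤ k * (h₂ * C) := by positivity
    linarith
  have hhh₁' : (h₁ : ℝ) ≤ h := by exact_mod_cast hhh₁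
  rw [Finset.sum_add_distrib, ← Finset.mul_sum]
  refine lt_of_mul_lt_mul_right ?_ h.cast_nonneg
  nlinarith [mul_le_mul_of_nonneg_right herror h.cast_nonneg,
    mul_nonneg (sub_nonneg.mpr hE') (sub_nonneg.mpr hhh₁')]

end Block

theorem exists_blockCheck_of_linearScan {f n h₁ : ℕ} (hh₁ : 0 < h₁)
    (hscan : linearScan f n (rowWeights n) (∑ i ∈ Finset.Icc 1 n, roundedRowError i) h₁ = true)
    {h : ℕ} (hh : h₁ ≤ h) (hhf : h ≤ n + f) :
    ∃ h₀, 0 < h₀ ∧ h₀ ≤ h ∧ h ≤ blockEnd h₀ ∧ blockCheck h₀ (blockEnd h₀) (rowWeights (blockEnd h₀))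
      (∑ i ∈ Finset.Icc 1 (blockEnd h₀), roundedRowError i) = true := by
  induction f generalizing n h₁ with
  | zero =>
    simp [linearScan] at hscan
    omega
  | succ f ih =>
    simp only [linearScan, force_eq, withRowEstimate_eq, ← rowWeights_succ,
      ← Finset.sum_Icc_succ_top (Nat.le_add_left 1 n)] at hscan
    split_ifs at hscan with hn
    · obtain ⟨hcheck, hscan⟩ := Bool.and_eq_true_iff.mp hscan
      by_cases hhn : h ≤ n + 1
      · exact ⟨h₁, hh₁, hh, hn ▸ hhn, hn ▸ hcheck⟩
      · exact ih (Nat.succ_pos _) hscan (by omega) (by omega)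
    · exact ih hh₁ hscan hh (by omega)

set_option maxRecDepth 10000 in
theorem linearScan_eq_true : linearScan 1361 0 [] 0 1 = true := by
  decide +kernel

theorem exists_blockCheck {h : ℕ} (hh : 0 < h) (hh' : h ≤ 1361) :
    ∃ h₀, 0 < h₀ ∧ h₀ ≤ h ∧ h ≤ blockEnd h₀ ∧ blockCheck h₀ (blockEnd h₀) (rowWeights (blockEnd h₀))
      (∑ i ∈ Finset.Icc 1 (blockEnd h₀), roundedRowError i) = true := by
  refine exists_blockCheck_of_linearScan (f := 1361) (n := 0) one_pos ?_ hh (by rwa [zero_add])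
  rw [rowWeights, Finset.Icc_eq_empty (by norm_num), Finset.sum_empty]
  exact linearScan_eq_true

theorem isRowEstimate_rowWeight {n : ℕ} (hn : 0 < n) :
    IsRowEstimate n (rowWeight n / n) (roundedRowError n / roundingScale) := by
  have hqn : rowModulus n ∣ n := by
    rw [rowModulus]
    split_ifs
    exacts [dvd_rfl, n.gcd_dvd_left 2310]
  have hq := Nat.pos_of_dvd_of_pos hqn hn
  have hq₀ : (0 : ℝ) < rowModulus n := by exact_mod_cast hq
  have hslope : (rowWeight n / n : ℝ) = (rowModulus n).totient / rowModulus n := by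
    rw [rowWeight, Nat.cast_mul, Nat.cast_div hqn hq₀.ne']
    field_simp
  have herror : roundingScale * ((2 * discrepancy (rowModulus n) : ℝ) -
      if rowModulus n = 1 then 1 else 0) ≤ rowModulus n * roundedRowError n := by
    have hceil : roundingScale *
        (2 * discrepancy (rowModulus n) - if rowModulus n = 1 then 1 else 0) ≤
        rowModulus n * roundedRowError n := le_smul_ceilDiv hq
    have hsub : (2 * discrepancy (rowModulus n) : ℝ) - (if rowModulus n = 1 then 1 else 0) ≤
        (2 * discrepancy (rowModulus n) - if rowModulus n = 1 then 1 else 0 : ℕ) := by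
      rw [sub_le_iff_le_add]
      exact_mod_cast le_tsub_add
    exact (mul_le_mul_of_nonneg_left hsub (Nat.cast_nonneg _)).trans (by exact_mod_cast hceil)
  intro x y hxy
  refine (isRowEstimate_of_dvd hn hqn x y hxy).trans ?_
  rw [hslope]
  refine add_le_add_right ?_ _
  rw [div_le_div_iff₀ hq₀ (by norm_num [roundingScale])]
  linarith

theorem staircaseBound_eq_zero {h : ℕ} (hh : 50 ≤ h) : staircaseBound h = 0 :=
  List.getD_eq_default _ _ hh

theorem max_staircaseBound_le {h₀ h k : ℕ} (hh : h₀ ≤ h) (hh' : h ≤ blockEnd h₀)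
    (hk : 3 * h ^ 2 ≤ 4 * k) (hkh : staircaseBound h ≤ k) :
    max (staircaseBound h₀) (3 * h₀ ^ 2 ⌈/⌉ 4) ≤ k := by
  rw [max_le_iff, ceilDiv_le_iff_le_mul (by norm_num)]
  refine ⟨?_, le_trans (by gcongr) hk⟩
  obtain rfl | hlt := hh.eq_or_lt
  · exact hkh
  · rw [blockEnd] at hh'
    rw [staircaseBound_eq_zero (by omega)]
    exact k.zero_le

theorem IsRowBound.coprimeSum_add_le_of_staircaseBound_le {k h : ℕ} {x y : ℕ → ℕ}
    (hxy : IsRowBound k h x y) (htop : IsTopRow h (x h) (y h)) (hk : 3 * h ^ 2 ≤ 4 * k)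
    (hh : h ≤ 1361) (hkh : staircaseBound h ≤ k) :
    coprimeSum h x + coprimeSum h y ≤ coprimeSum h id + (k + 4) := by
  have hh₀ := htop.pos
  obtain ⟨h₀, hpos, hle, hle', hcheck⟩ := exists_blockCheck hh₀ hh
  have hlt := sum_rowWeight_mul_add_lt_of_blockCheck hh₀
    (fun n hn m hm ↦ hxy.rowExcess_add_le hn hm) htop.rowExcess_nonneg hpos hcheck hle hle'
    (max_staircaseBound_le hle hle' hk hkh)
  have hsum := hxy.coprimeSum_add_le (δ := fun n ↦ rowWeight n / n)
    (e := fun n ↦ roundedRowError n / roundingScale)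
    fun n hn ↦ isRowEstimate_rowWeight (Finset.mem_Icc.mp hn).1
  have hscale : (0 : ℝ) < roundingScale := by norm_num [roundingScale]
  have hexcess : ∑ n ∈ Finset.Icc 1 h, (n * (rowWeight n / n : ℝ) * rowExcess x y n +
      roundedRowError n / roundingScale) < k + 5 := by
    refine lt_of_mul_lt_mul_left (lt_of_eq_of_lt ?_ hlt) hscale.le
    rw [Finset.mul_sum]
    refine Finset.sum_congr rfl fun n hn ↦ ?_
    have : (n : ℝ) ≠ 0 := Nat.cast_ne_zero.mpr (Nat.ne_of_gt (Finset.mem_Icc.mp hn).1)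
    field_simp
  have : coprimeSum h x + coprimeSum h y < coprimeSum h id + (k + 5) := by
    exact_mod_cast hsum.trans_lt (add_lt_add_right hexcess _)
  omega

/-! ### Staircases of packed tables -/

/-- The base in which a table of natural numbers is packed into a single number. -/
def tableBase : ℕ := 65536

/-- The entry at `x` of the packed table `T`. -/
def entry (T x : ℕ) : ℕ := T / tableBase ^ x % tableBase

/-- The packed table whose first `l` entries are `1`. -/
def repunit (l : ℕ) : ℕ := (tableBase.pow l).div (tableBase.sub 1)

/-- The packed table which at `y` holds the amount by which the largest among the first `c` entries
of `T` at positions `x` with `m * x + n * y ≤ K` exceeds `r`. This innermost loop is written with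
the recursor and the bare functions on `ℕ`, since otherwise the kernel would mostly unfold compiled
recursion and notation. -/
def excessTable (m n c : ℕ) : (T K r : ℕ) → ℕ :=
  c.rec (fun _ _ _ ↦ 0) fun _ ih T K r ↦
    bif (T.mod tableBase).ble r then ih (T.div tableBase) (K.sub m) r
    else (((T.mod tableBase).sub r).mul (repunit (K.div n).succ)).add
      (ih (T.div tableBase) (K.sub m) (T.mod tableBase))

/-- A row of a staircase: a packed table of values for the variable attached to the row, and an
upper bound for that variable. -/
structure PackedRow where
  /-- The index of the row. -/
  index : ℕ
  /-- An upper bound for the variable of the row. -/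
  cap : ℕ
  /-- The values, packed in base `tableBase`. -/
  table : ℕ

/-- The largest value in the table of a row. -/
noncomputable def PackedRow.maxEntry (r : PackedRow) : ℕ := ⨆ x, entry r.table x

/-- Adds to the table of the second row, `n`, the best value in the table of the first row, `m`,
subject to `n * x + m * y ≤ k + m * n`. -/
def PackedRow.absorb (k : ℕ) : PackedRow → PackedRow → PackedRow
  | ⟨m, c, T⟩, ⟨n, d, S⟩ => ⟨n, min d ((k + m * n) / m),
      S + excessTable n m (min c ((k + m * n) / n) + 1) T (k + m * n) 0⟩

/-- The value `f r`, evaluated after reducing the fields of `r` to numerals. -/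
def PackedRow.force {α : Type} (r : PackedRow) (f : PackedRow → α) : α :=
  _root_.force r.index fun n ↦ _root_.force r.cap fun c ↦ _root_.force r.table fun T ↦ f ⟨n, c, T⟩

/-- The value `f X`, evaluated after reducing the rows in `X` to numerals. -/
def forceRows {α : Type} : (X : List PackedRow) → (f : List PackedRow → α) → α
  | [], f => f []
  | r :: X, f => r.force fun r ↦ forceRows X fun X ↦ f (r :: X)

/-- An upper bound for the total value of the rows in `X` and `Y`, subject to those pairwise
constraints that are met on the staircase path `p`: at each step one of the two heads absorbs the
other, the head of `X` being consumed for `true` and the head of `Y` for `false`. -/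
def staircaseMax (k : ℕ) : (p : List Bool) → (X Y : List PackedRow) → ℕ
  | true :: p, r :: X, t :: Y => (r.absorb k t).force fun t ↦ staircaseMax k p X (t :: Y)
  | false :: p, r :: X, t :: Y => (t.absorb k r).force fun r ↦ staircaseMax k p (r :: X) Y
  | [], [r], [t] => (r.absorb k t).force fun t ↦ excessTable 0 1 (t.cap + 1) t.table 0 0
  | _, _, _ => tableBase - 1

theorem PackedRow.force_eq {α : Type} (r : PackedRow) (f : PackedRow → α) : r.force f = f r := by
  simp [PackedRow.force]

theorem forceRows_eq {α : Type} (X : List PackedRow) (f : List PackedRow → α) :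
    forceRows X f = f X := by
  induction X generalizing f with
  | nil => rfl
  | cons r X ih => rw [forceRows, PackedRow.force_eq, ih]

theorem entry_lt (T x : ℕ) : entry T x < tableBase := Nat.mod_lt _ (by norm_num [tableBase])

theorem entry_zero (T : ℕ) : entry T 0 = T % tableBase := by simp [entry]

theorem entry_succ (T x : ℕ) : entry T (x + 1) = entry (T / tableBase) x := by
  rw [entry, entry, pow_succ', Nat.div_div_eq_div_mul]

theorem zero_entry (x : ℕ) : entry 0 x = 0 := by simp [entry]

theorem entry_add {S T : ℕ} (h : ∀ x, entry S x + entry T x < tableBase) (x : ℕ) :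
    entry (S + T) x = entry S x + entry T x := by
  induction x generalizing S T with
  | zero =>
    have := h 0
    simp only [entry_zero] at this ⊢
    rw [Nat.add_mod, Nat.mod_eq_of_lt this]
  | succ x ih =>
    have hzero := h 0
    simp only [entry_zero] at hzero
    rw [entry_succ, Nat.add_div_eq_of_add_mod_lt hzero, ih fun i ↦ ?_, ← entry_succ, ← entry_succ]
    simpa only [entry_succ] using h (i + 1)

theorem repunit_succ (l : ℕ) : repunit (l + 1) = tableBase * repunit l + 1 := by
  have hadd : ∀ l, repunit (l + 1) = tableBase ^ l + repunit l := fun l ↦ by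
    change tableBase ^ (l + 1) / (tableBase - 1) = tableBase ^ l + tableBase ^ l / (tableBase - 1)
    rw [show tableBase ^ (l + 1) = tableBase ^ l + (tableBase - 1) * tableBase ^ l by
      rw [tableBase]; ring, Nat.add_mul_div_left _ _ (by norm_num [tableBase]), add_comm]
  induction l with
  | zero => rfl
  | succ l ih =>
    calc repunit (l + 2) = tableBase * (tableBase ^ l + repunit l) + 1 := by rw [hadd, ih]; ring
      _ = tableBase * repunit (l + 1) + 1 := by rw [hadd]

theorem entry_mul_repunit {d : ℕ} (hd : d < tableBase) (l x : ℕ) :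
    entry (d * repunit l) x = if x < l then d else 0 := by
  induction l generalizing x with
  | zero => rw [show repunit 0 = 0 from rfl, mul_zero, zero_entry, if_neg x.not_lt_zero]
  | succ l ih =>
    have hpos : 0 < tableBase := d.zero_le.trans_lt hd
    rw [repunit_succ,
      show d * (tableBase * repunit l + 1) = d + tableBase * (d * repunit l) by ring]
    cases x with
    | zero => simp [entry_zero, Nat.mod_eq_of_lt hd]
    | succ x => simp [entry_succ, Nat.add_mul_div_left, hpos, Nat.div_eq_of_lt hd, ih]

theorem excessTable_zero (m n T K r : ℕ) : excessTable m n 0 T K r = 0 := rfl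

theorem excessTable_succ (m n c T K r : ℕ) :
    excessTable m n (c + 1) T K r =
      if entry T 0 ≤ r then excessTable m n c (T / tableBase) (K - m) r
      else (entry T 0 - r) * repunit (K / n + 1) +
        excessTable m n c (T / tableBase) (K - m) (entry T 0) := by
  simp only [entry_zero, ← Nat.ble_eq, ← cond_eq_ite]
  rfl

theorem entry_mul_repunit_add {d e R b : ℕ} (hde : d ≤ e) (hb : b < tableBase)
    (hR : ∀ x, entry R x + e ≤ b) (l x : ℕ) :
    entry (d * repunit l + R) x = (if x < l then d else 0) + entry R x := by
  have hd : d < tableBase := by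
    have := hR 0
    omega
  rw [entry_add fun x ↦ ?_, entry_mul_repunit hd]
  have := hR x
  rw [entry_mul_repunit hd]
  split_ifs <;> omega

theorem entry_excessTable {m n b : ℕ} (hn : 0 < n) (hb : b < tableBase) {T r : ℕ}
    (hT : ∀ x, entry T x ≤ b) (hr : r ≤ b) (c K : ℕ) :
    (∀ y, entry (excessTable m n c T K r) y + r ≤ b) ∧ ∀ y, ∀ x < c, m * x + n * y ≤ K →
      entry T x ≤ entry (excessTable m n c T K r) y + r := by
  induction c generalizing T K r with
  | zero => simp [excessTable_zero, zero_entry, hr]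
  | succ c ih =>
    have hT' : ∀ x, entry (T / tableBase) x ≤ b := fun x ↦ by simpa [entry_succ] using hT (x + 1)
    have hK {x y} (hx : m * (x + 1) + n * y ≤ K) : m * x + n * y ≤ K - m := by
      rw [mul_add_one] at hx; omega
    rw [excessTable_succ]
    split_ifs with hd
    · obtain ⟨hle, hge⟩ := ih hT' hr (K - m)
      refine ⟨hle, fun y x hx hxy ↦ ?_⟩
      cases x with
      | zero => omega
      | succ x => exact entry_succ T x ▸ hge y x (by omega) (hK hxy)
    · obtain ⟨hle, hge⟩ := ih hT' (hT 0) (K - m)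
      have hentry := entry_mul_repunit_add ((entry T 0).sub_le r) hb hle (K / n + 1)
      refine ⟨fun y ↦ ?_, fun y x hx hxy ↦ ?_⟩
      · have := hle y
        rw [hentry]
        split_ifs <;> omega
      · have hy : y < K / n + 1 := by
          rw [Nat.lt_succ_iff, Nat.le_div_iff_mul_le hn, mul_comm]
          omega
        rw [hentry, if_pos hy]
        cases x with
        | zero => omega
        | succ x =>
          have := hge y x (by omega) (hK hxy)
          rw [entry_succ]
          omega

namespace PackedRow

theorem entry_le_maxEntry (r : PackedRow) (x : ℕ) : entry r.table x ≤ r.maxEntry :=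
  le_ciSup (f := entry r.table) ⟨tableBase, Set.forall_mem_range.mpr fun x ↦ (entry_lt _ x).le⟩ x

/-- The value of `x` at the index of the row respects the upper bound of the row. -/
structure Admits (r : PackedRow) (x : ℕ → ℕ) : Prop where
  index_pos : 0 < r.index
  le_cap : x r.index ≤ r.cap

/-- The value which the table of the row assigns to `x`. -/
def value (r : PackedRow) (x : ℕ → ℕ) : ℕ := entry r.table (x r.index)

section Absorb

variable {k : ℕ} {r t : PackedRow}

theorem entry_table_absorb (hr : 0 < r.index) (hmax : r.maxEntry + t.maxEntry < tableBase) (y : ℕ) :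
    entry (r.absorb k t).table y ≤ r.maxEntry + t.maxEntry ∧
    ∀ x ≤ r.cap, x ≤ (k + r.index * t.index) / t.index →
      t.index * x + r.index * y ≤ k + r.index * t.index →
      entry r.table x + entry t.table y ≤ entry (r.absorb k t).table y := by
  obtain ⟨hle, hge⟩ := entry_excessTable (m := t.index) hr (by omega) r.entry_le_maxEntry
    (Nat.zero_le _) (min r.cap ((k + r.index * t.index) / t.index) + 1) (k + r.index * t.index)
  have htable : entry (r.absorb k t).table y = _ := entry_add (fun y ↦
    (add_comm _ _).trans_lt ((add_le_add (hle y) (t.entry_le_maxEntry y)).trans_lt hmax)) y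
  rw [htable]
  refine ⟨?_, fun x hx hx' hxy ↦ ?_⟩
  · rw [add_comm]
    exact add_le_add (hle y) (t.entry_le_maxEntry y)
  · have := hge y x (Nat.lt_succ_of_le (le_min hx hx')) hxy
    omega

theorem maxEntry_absorb_le (hr : 0 < r.index) (hmax : r.maxEntry + t.maxEntry < tableBase) :
    (r.absorb k t).maxEntry ≤ r.maxEntry + t.maxEntry :=
  ciSup_le fun y ↦ (entry_table_absorb hr hmax y).1

variable {x y : ℕ → ℕ} (hr : r.Admits x) (ht : t.Admits y)
  (hrt : t.index * x r.index + r.index * y t.index ≤ k + r.index * t.index)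
include hr ht hrt

theorem Admits.absorb : (r.absorb k t).Admits y where
  index_pos := ht.index_pos
  le_cap := le_min ht.le_cap <| (Nat.le_div_iff_mul_le hr.index_pos).mpr <| by
    rw [mul_comm]
    exact le_of_add_le_right hrt

theorem value_add_value_le_value_absorb (hmax : r.maxEntry + t.maxEntry < tableBase) :
    r.value x + t.value y ≤ (r.absorb k t).value y :=
  (entry_table_absorb hr.index_pos hmax _).2 _ hr.le_cap
    ((Nat.le_div_iff_mul_le ht.index_pos).mpr <| by
      rw [mul_comm]
      exact le_of_add_le_left hrt) hrt

end Absorb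

theorem value_le_excessTable {r : PackedRow} {x : ℕ → ℕ} (hr : r.Admits x)
    (hmax : r.maxEntry < tableBase) : r.value x ≤ excessTable 0 1 (r.cap + 1) r.table 0 0 := by
  refine ((entry_excessTable (m := 0) one_pos hmax r.entry_le_maxEntry (Nat.zero_le _) _ 0).2 0 _
    (Nat.lt_succ_of_le hr.le_cap) (by simp)).trans ?_
  rw [add_zero, entry_zero]
  exact Nat.mod_le _ _

theorem sum_value_le_sum_maxEntry (x : ℕ → ℕ) (X : List PackedRow) :
    (X.map fun r ↦ r.value x).sum ≤ (X.map maxEntry).sum :=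
  List.sum_le_sum fun r _ ↦ r.entry_le_maxEntry _

theorem sum_value_add_sum_value_le {k : ℕ} {x y : ℕ → ℕ} {p : List Bool} {X Y : List PackedRow}
    (hX : ∀ r ∈ X, r.Admits x) (hY : ∀ t ∈ Y, t.Admits y)
    (hXY : ∀ r ∈ X, ∀ t ∈ Y, t.index * x r.index + r.index * y t.index ≤ k + r.index * t.index)
    (hmax : (X.map maxEntry).sum + (Y.map maxEntry).sum < tableBase) :
    (X.map fun r ↦ r.value x).sum + (Y.map fun t ↦ t.value y).sum ≤ staircaseMax k p X Y := by
  induction p, X, Y using staircaseMax.induct with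
  | case1 p r X t Y ih =>
    simp only [List.forall_mem_cons, List.map_cons, List.sum_cons] at hX hY hXY hmax ih ⊢
    rw [staircaseMax, force_eq]
    have hrt := hXY.1.1
    have := maxEntry_absorb_le (k := k) (r := r) (t := t) hX.1.index_pos (by omega)
    have := value_add_value_le_value_absorb hX.1 hY.1 hrt (by omega)
    have := ih (r.absorb k t) hX.2 ⟨hX.1.absorb hY.1 hrt, hY.2⟩ hXY.2 (by omega)
    omega
  | case2 p r X t Y ih =>
    simp only [List.forall_mem_cons, List.map_cons, List.sum_cons] at hX hY hXY hmax ih ⊢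
    rw [staircaseMax, force_eq]
    have htr : r.index * y t.index + t.index * x r.index ≤ k + t.index * r.index := by
      rw [add_comm, mul_comm t.index r.index]
      exact hXY.1.1
    have := maxEntry_absorb_le (k := k) (r := t) (t := r) hY.1.index_pos (by omega)
    have := value_add_value_le_value_absorb hY.1 hX.1 htr (by omega)
    have := ih (t.absorb k r) ⟨hY.1.absorb hX.1 htr, hX.2⟩ hY.2
      ⟨hXY.1.2, fun s hs ↦ (hXY.2 s hs).2⟩ (by omega)
    omega
  | case3 r t =>
    simp only [List.forall_mem_cons, List.map_cons, List.sum_cons, List.map_nil, List.sum_nil,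
      add_zero] at hX hY hXY hmax ⊢
    rw [staircaseMax, force_eq]
    exact (value_add_value_le_value_absorb hX.1 hY.1 hXY.1.1 hmax).trans <|
      value_le_excessTable (hX.1.absorb hY.1 hXY.1.1) <|
      (maxEntry_absorb_le hX.1.index_pos hmax).trans_lt hmax
  | case4 p X Y h₁ h₂ h₃ =>
    rw [staircaseMax.eq_4 _ _ _ _ h₁ h₂ h₃]
    have := sum_value_le_sum_maxEntry x X
    have := sum_value_le_sum_maxEntry y Y
    omega

end PackedRow

/-! ### Searching the top rows -/

/-- The packed table of length `c` with entries `coprimeCount n x`, `coprimeCount n (x + 1)`, …,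
where `r` is the number of integers below `x` coprime to `n`. -/
def coprimeTable (n : ℕ) : (c x r : ℕ) → ℕ
  | 0, _, _ => 0
  | c + 1, x, r => force (if n.Coprime x then r + 1 else r) fun r ↦
      force (x + 1) fun x ↦ r + tableBase * coprimeTable n c x r

/-- The tables of the rows `1, …, h`, of length `c`. -/
def coprimeTables (h c : ℕ) : List ℕ := (List.range' 1 h).map fun n ↦ coprimeTable n c 0 0

/-- The rows `1, …, h` with the tables `l`, where the variable of the top row lies in `[s, e]` and
that of the opposite top row is at least `u`. -/
def packedRows (h k e u : ℕ) (l : List ℕ) : List PackedRow :=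
  List.zipWith (fun n T ↦ ⟨n, if n = h then min e ((k + n * (h - u)) / h) else
    (k + n * (h - u)) / h, T⟩) (List.range' 1 h) l

/-- An upper bound for `coprimeSum h x + coprimeSum h y` when `s₁ ≤ x h ≤ s₂` and `u₁ ≤ y h ≤ u₂`,
computed along the staircase path `p`. -/
def boxMax (h k : ℕ) (l : List ℕ) (s₁ s₂ u₁ u₂ : ℕ) (p : List Bool) : ℕ :=
  forceRows (packedRows h k s₂ u₁ l) fun X ↦
    forceRows (packedRows h k u₂ s₁ l).reverse fun Y ↦ staircaseMax k p X Y

/-- Whether bisecting the box `[s₁, s₂] × [u₁, u₂]` at most `f` times proves the bound `B` for all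
values of `(x h, y h)` in the box, by means of the staircase paths in `P`. -/
def boxCheck (h k : ℕ) (l : List ℕ) (P : List (List Bool)) (B : ℕ) : (f s₁ s₂ u₁ u₂ : ℕ) → Bool
  | 0, _, _, _, _ => false
  | f + 1, s₁, s₂, u₁, u₂ =>
    force (max s₁ (h - u₂)) fun s₁ ↦ force (min s₂ (h - u₁ + k / h)) fun s₂ ↦
      s₂ < s₁ || P.any (fun p ↦ boxMax h k l s₁ s₂ u₁ u₂ p ≤ B) ||
      if u₁ < u₂ then force ((u₁ + u₂) / 2) fun u ↦
        boxCheck h k l P B f s₁ s₂ u₁ u && boxCheck h k l P B f s₁ s₂ (u + 1) u₂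
      else if s₁ < s₂ then force ((s₁ + s₂) / 2) fun s ↦
        boxCheck h k l P B f s₁ s u₁ u₂ && boxCheck h k l P B f (s + 1) s₂ u₁ u₂
      else !(h.Coprime s₁ && h.Coprime u₁)

theorem entry_coprimeTable {n c x : ℕ} (hx : x + c < tableBase) (i : ℕ) :
    entry (coprimeTable n c x (Nat.count n.Coprime x)) i =
      if i < c then coprimeCount n (x + i) else 0 := by
  induction c generalizing x i with
  | zero => simp [coprimeTable, zero_entry]
  | succ c ih =>
    have hcount : (if n.Coprime x then Nat.count n.Coprime x + 1 else Nat.count n.Coprime x) =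
        Nat.count n.Coprime (x + 1) := by
      rw [Nat.count_succ]
      split_ifs <;> rfl
    have hlt : Nat.count n.Coprime (x + 1) < tableBase := (Nat.count_le _).trans_lt (by omega)
    rw [coprimeTable, force_eq, force_eq, hcount]
    cases i with
    | zero => simp [entry_zero, coprimeCount, Nat.mod_eq_of_lt hlt]
    | succ i =>
      rw [entry_succ, Nat.add_mul_div_left _ _ (by norm_num [tableBase]), Nat.div_eq_of_lt hlt,
        zero_add, ih (by omega), add_right_comm, add_assoc]
      simp

theorem maxEntry_coprimeTable_le {c : ℕ} (hc : c < tableBase) (n a : ℕ) :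
    (PackedRow.mk n a (coprimeTable n c 0 0)).maxEntry ≤ c := by
  refine ciSup_le fun i ↦ ?_
  have := entry_coprimeTable (n := n) ((zero_add c).trans_lt hc) i
  rw [Nat.count_zero] at this
  rw [this]
  split_ifs with hi
  · exact (Nat.count_le _).trans (by omega)
  · exact c.zero_le

theorem value_coprimeTable {c : ℕ} (hc : c < tableBase) (n a : ℕ) {x : ℕ → ℕ} (hx : x n < c) :
    (PackedRow.mk n a (coprimeTable n c 0 0)).value x = coprimeCount n (x n) := by
  have := entry_coprimeTable (n := n) ((zero_add c).trans_lt hc) (x n)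
  rwa [Nat.count_zero, zero_add, if_pos hx] at this

theorem packedRows_coprimeTables (h k e u c : ℕ) : packedRows h k e u (coprimeTables h c) =
    (List.range' 1 h).map fun n ↦ ⟨n, if n = h then min e ((k + n * (h - u)) / h) else
      (k + n * (h - u)) / h, coprimeTable n c 0 0⟩ := by
  rw [packedRows, coprimeTables, List.zipWith_map_right, List.zipWith_self]

theorem index_mem_of_mem_packedRows {h k e u c : ℕ} :
    ∀ r ∈ packedRows h k e u (coprimeTables h c), r.index ∈ Finset.Icc 1 h := by
  rw [packedRows_coprimeTables, List.forall_mem_map]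
  intro n hn
  rw [List.mem_range'_1] at hn
  exact Finset.mem_Icc.mpr ⟨hn.1, Nat.le_of_lt_succ (by rw [← Nat.add_one, add_comm h]; exact hn.2)⟩

theorem sum_maxEntry_packedRows_le {c : ℕ} (hc : c < tableBase) (h k e u : ℕ) :
    ((packedRows h k e u (coprimeTables h c)).map PackedRow.maxEntry).sum ≤ h * c := by
  rw [packedRows_coprimeTables, List.map_map]
  refine (List.sum_le_card_nsmul _ c ?_).trans (by simp)
  simp only [List.forall_mem_map]
  exact fun n _ ↦ maxEntry_coprimeTable_le hc _ _

theorem sum_value_packedRows {h c : ℕ} (hc : c < tableBase) {x : ℕ → ℕ}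
    (hx : ∀ n ∈ Finset.Icc 1 h, x n < c) (k e u : ℕ) :
    ((packedRows h k e u (coprimeTables h c)).map fun r ↦ r.value x).sum = coprimeSum h x := by
  rw [packedRows_coprimeTables, List.map_map, coprimeSum, Finset.sum, Nat.Icc_eq_range']
  refine congrArg List.sum (List.map_congr_left fun n hn ↦ value_coprimeTable hc _ _ (hx n ?_))
  rw [List.mem_range'_1] at hn
  exact Finset.mem_Icc.mpr ⟨hn.1, by omega⟩

theorem IsRowBound.symm {k h : ℕ} {x y : ℕ → ℕ} (hxy : IsRowBound k h x y) :
    IsRowBound k h y x where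
  mul_add_mul_le n hn m hm := by
    rw [add_comm, mul_comm n m]
    exact hxy.mul_add_mul_le m hm n hn
  le_add_add_one n hn := by
    rw [add_comm (y n)]
    exact hxy.le_add_add_one n hn

theorem IsRowBound.mono {k k' h : ℕ} {x y : ℕ → ℕ} (hxy : IsRowBound k h x y) (hk : k ≤ k') :
    IsRowBound k' h x y where
  mul_add_mul_le n hn m hm := (hxy.mul_add_mul_le n hn m hm).trans (by omega)
  le_add_add_one := hxy.le_add_add_one

section RowBound

variable {k h : ℕ} {x y : ℕ → ℕ} (hh : 0 < h) (hxy : IsRowBound k h x y)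
include hh hxy

theorem IsRowBound.le_div_add {u n : ℕ} (hu : u ≤ y h) (hn : n ∈ Finset.Icc 1 h) :
    x n ≤ (k + n * (h - u)) / h := by
  have := hxy.mul_add_mul_le n hn h (Finset.mem_Icc.mpr ⟨hh, le_rfl⟩)
  have := Nat.mul_le_mul_left n hu
  rw [Nat.le_div_iff_mul_le hh, Nat.mul_sub, mul_comm]
  omega

theorem IsRowBound.top_le {u : ℕ} (hu : u ≤ y h) : x h ≤ h - u + k / h := by
  have := hxy.le_div_add hh hu (Finset.mem_Icc.mpr ⟨hh, le_rfl⟩)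
  rwa [Nat.add_mul_div_left _ _ hh, add_comm] at this

theorem IsRowBound.admits_packedRows {e u c : ℕ} (he : x h ≤ e) (hu : u ≤ y h) :
    ∀ r ∈ packedRows h k e u (coprimeTables h c), r.Admits x := by
  rw [packedRows_coprimeTables, List.forall_mem_map]
  intro n hn
  rw [List.mem_range'_1] at hn
  have hle := hxy.le_div_add hh hu (n := n) (Finset.mem_Icc.mpr ⟨hn.1, by omega⟩)
  refine ⟨hn.1, ?_⟩
  dsimp only
  split_ifs with hnh
  · exact le_min (hnh ▸ he) hle
  · exact hle

theorem IsRowBound.lt_of_div_add_lt {c : ℕ} (hc : k / h + h < c) :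
    ∀ n ∈ Finset.Icc 1 h, x n < c := by
  intro n hn
  refine (hxy.le_div_add hh (Nat.zero_le _) hn).trans_lt (lt_of_le_of_lt ?_ hc)
  rw [tsub_zero, Nat.add_mul_div_right _ _ hh]
  exact Nat.add_le_add_left (Finset.mem_Icc.mp hn).2 _

variable {c : ℕ} (hc : k / h + h < c) (hc' : 2 * (h * c) < tableBase)
include hc hc'

theorem IsRowBound.coprimeSum_add_le_boxMax {s₁ s₂ u₁ u₂ : ℕ} (hs : x h ∈ Set.Icc s₁ s₂)
    (hu : y h ∈ Set.Icc u₁ u₂) (p : List Bool) :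
    coprimeSum h x + coprimeSum h y ≤ boxMax h k (coprimeTables h c) s₁ s₂ u₁ u₂ p := by
  have hc'' : c < tableBase := by nlinarith
  rw [boxMax, forceRows_eq, forceRows_eq,
    ← sum_value_packedRows hc'' (hxy.lt_of_div_add_lt hh hc) k s₂ u₁,
    ← sum_value_packedRows hc'' (hxy.symm.lt_of_div_add_lt hh hc) k u₂ s₁,
    ← List.sum_reverse (List.map _ (packedRows h k u₂ s₁ _)), ← List.map_reverse]
  refine PackedRow.sum_value_add_sum_value_le (hxy.admits_packedRows hh hs.2 hu.1)
    (fun t ht ↦ hxy.symm.admits_packedRows hh hu.2 hs.1 t (List.mem_reverse.mp ht))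
    (fun r hr t ht ↦ hxy.mul_add_mul_le _ (index_mem_of_mem_packedRows r hr) _
      (index_mem_of_mem_packedRows t (List.mem_reverse.mp ht))) ?_
  rw [List.map_reverse, List.sum_reverse]
  have := sum_maxEntry_packedRows_le hc'' h k s₂ u₁
  have := sum_maxEntry_packedRows_le hc'' h k u₂ s₁
  omega

theorem IsRowBound.coprimeSum_add_le_of_boxCheck (htop : IsTopRow h (x h) (y h))
    {P : List (List Bool)} {B f s₁ s₂ u₁ u₂ : ℕ}
    (hcheck : boxCheck h k (coprimeTables h c) P B f s₁ s₂ u₁ u₂ = true)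
    (hs : x h ∈ Set.Icc s₁ s₂) (hu : y h ∈ Set.Icc u₁ u₂) :
    coprimeSum h x + coprimeSum h y ≤ B := by
  induction f generalizing s₁ s₂ u₁ u₂ with
  | zero => simp [boxCheck] at hcheck
  | succ f ih =>
    simp only [boxCheck, force_eq, Bool.or_eq_true, decide_eq_true_eq, List.any_eq_true] at hcheck
    have hs' : x h ∈ Set.Icc (max s₁ (h - u₂)) (min s₂ (h - u₁ + k / h)) := by
      have := htop.le_add
      have := hu.2
      exact ⟨max_le hs.1 (by omega), le_min hs.2 (hxy.top_le hh hu.1)⟩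
    generalize max s₁ (h - u₂) = s₁, min s₂ (h - u₁ + k / h) = s₂ at hcheck hs'
    obtain (hempty | ⟨p, -, hp⟩) | hsplit := hcheck
    · exact absurd (hs'.1.trans hs'.2) hempty.not_ge
    · exact (hxy.coprimeSum_add_le_boxMax hh hc hc' hs' hu p).trans hp
    split_ifs at hsplit with huu hss
    · obtain ⟨hlow, hhigh⟩ := Bool.and_eq_true_iff.mp hsplit
      rcases le_or_gt (y h) ((u₁ + u₂) / 2) with hy | hy
      exacts [ih hlow hs' ⟨hu.1, hy⟩, ih hhigh hs' ⟨hy, hu.2⟩]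
    · obtain ⟨hlow, hhigh⟩ := Bool.and_eq_true_iff.mp hsplit
      rcases le_or_gt (x h) ((s₁ + s₂) / 2) with hx | hx
      exacts [ih hlow ⟨hs'.1, hx⟩ hu, ih hhigh ⟨hx, hs'.2⟩ hu]
    · obtain rfl : x h = s₁ := le_antisymm (hs'.2.trans (not_lt.mp hss)) hs'.1
      obtain rfl : y h = u₁ := le_antisymm (hu.2.trans (not_lt.mp huu)) hu.1
      simp [htop.coprime_right, htop.coprime_left] at hsplit

end RowBound

/-! ### Scanning the small values of `k` -/

/-- The value `f l`, evaluated after reducing the entries of `l` to numerals. -/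
def forceList {α : Type} : (l : List ℕ) → (f : List ℕ → α) → α
  | [], f => f []
  | n :: l, f => force n fun n ↦ forceList l fun l ↦ f (n :: l)

/-- The value `f p`, evaluated after reducing the entries of `p` to literals. -/
def forcePath {α : Type} : (p : List Bool) → (f : List Bool → α) → α
  | [], f => f []
  | true :: p, f => forcePath p fun p ↦ f (true :: p)
  | false :: p, f => forcePath p fun p ↦ f (false :: p)

/-- The staircase path of the northwest-corner transport plan between the weights `V` and `W`,
where `f` bounds the number of steps. -/
def greedyPath : (f : ℕ) → (V W : List ℕ) → List Bool
  | f + 1, v :: V, w :: W =>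
    if v ≤ w then force (w - v) fun w ↦ if V = [] then [] else true :: greedyPath f V (w :: W)
    else force (v - w) fun v ↦ if W = [] then [] else false :: greedyPath f (v :: V) W
  | _, _, _ => []

/-- The path whose steps are the `n` lowest binary digits of `b`. -/
def pathOfBits : (n b : ℕ) → List Bool
  | 0, _ => []
  | n + 1, b => (b % 2 = 1) :: pathOfBits n (b / 2)

/-- Further staircase paths for the three heights at which the greedy one does not suffice. -/
def extraPaths (h : ℕ) : List (List Bool) :=
  (match h with
    | 11 => [546127]
    | 12 => [2120055, 267647, 284030]
    | 13 => [666431]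
    | _ => []).map (pathOfBits (2 * h - 2))

/-- Whether no prime divisor of `q` is at most `42`, except possibly `q` itself. -/
def isPrimeTest (q : ℕ) : Bool := q.Coprime (min (q - 1) 42).factorial

/-- Whether the theorem for `k` needs no staircase bound: either a prime just above `k` bounds the
size of a `k`-nice set, or `k` is one of the four exceptional values. -/
def isSettled (k : ℕ) : Bool :=
  (List.range' 1 4).any (fun i ↦ isPrimeTest (k + i)) || k ∈ [24, 48, 120, 168]

/-- Checks the bound `k' + S` on the coprime sums at height `h` for all `k' < k` which are not
settled, given that it holds for all `k' ≥ t`. -/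
def staircaseScan (h S : ℕ) (l : List ℕ) (p : List Bool) (P : List (List Bool)) : (k t : ℕ) → Bool
  | 0, _ => true
  | k + 1, t =>
    if 4 * k < 3 * h ^ 2 then true
    else if t ≤ k || isSettled k then staircaseScan h S l p P k t
    else force (boxMax h k l 0 (h + k / h) 1 h p) fun v ↦
      if v ≤ k + S then force (v - S) fun t ↦ staircaseScan h S l p P k t
      else boxCheck h k l (p :: P) (k + S) 30 0 (h + k / h) 1 h && staircaseScan h S l p P k t

/-- The scan of all `k < staircaseBound h` at height `h`. -/
def staircaseCheck (h : ℕ) : Bool :=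
  forceList (coprimeTables h (staircaseBound h / h + h + 1)) fun l ↦
  forceList ((List.range' 1 h).map fun n ↦ Nat.count n.Coprime n) fun w ↦
  forcePath (greedyPath (2 * h) w w.reverse) fun p ↦
  force (((List.range' 1 h).map fun n ↦ coprimeCount n n).sum + 4) fun S ↦
  force (staircaseBound h) fun k ↦ staircaseScan h S l p (extraPaths h) k k

theorem forceList_eq {α : Type} (l : List ℕ) (f : List ℕ → α) : forceList l f = f l := by
  induction l generalizing f with
  | nil => rfl
  | cons n l ih => rw [forceList, force_eq, ih]

theorem forcePath_eq {α : Type} (p : List Bool) (f : List Bool → α) : forcePath p f = f p := by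
  induction p generalizing f with
  | nil => rfl
  | cons b p ih => cases b <;> rw [forcePath, ih]

theorem prime_of_isPrimeTest {q : ℕ} (hq : 1 < q) (hq' : q < 43 ^ 2)
    (htest : isPrimeTest q = true) : q.Prime := by
  rw [isPrimeTest, decide_eq_true_eq] at htest
  by_contra hprime
  have hmin := Nat.minFac_prime hq.ne'
  have hsq := Nat.minFac_sq_le_self (by omega) hprime
  have hlt : q.minFac < 43 := lt_of_pow_lt_pow_left₀ 2 (by norm_num) (hsq.trans_lt hq')
  have hlt' : q.minFac < q := lt_of_le_of_ne (Nat.minFac_le (by omega)) fun h ↦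
    hprime (Nat.prime_def_minFac.mpr ⟨hq, h⟩)
  refine hmin.one_lt.ne' (Nat.eq_one_of_dvd_coprimes htest q.minFac_dvd
    (Nat.dvd_factorial hmin.pos (le_min ?_ ?_))) <;> omega

theorem exists_prime_of_isSettled {k : ℕ} (hk : 0 < k) (hk' : k + 4 < 43 ^ 2)
    (hset : isSettled k = true) :
    (∃ q, q.Prime ∧ k < q ∧ q ≤ k + 4) ∨ k = 24 ∨ k = 48 ∨ k = 120 ∨ k = 168 := by
  simp only [isSettled, Bool.or_eq_true, List.any_eq_true, List.mem_range'_1, decide_eq_true_eq,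
    List.mem_cons, List.not_mem_nil, or_false] at hset
  refine hset.imp_left fun ⟨i, hi, htest⟩ ↦ ⟨k + i, prime_of_isPrimeTest ?_ ?_ htest, ?_, ?_⟩ <;>
    omega

section Scan

variable {k h : ℕ} {x y : ℕ → ℕ} (hxy : IsRowBound k h x y) (htop : IsTopRow h (x h) (y h))
  (hk : 3 * h ^ 2 ≤ 4 * k) (hset : isSettled k = false)
include hxy htop hk hset

theorem IsRowBound.coprimeSum_add_le_of_staircaseScan {c S K t : ℕ} {p : List Bool}
    {P : List (List Bool)} (hc : K / h + h < c) (hc' : 2 * (h * c) < tableBase)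
    (hscan : staircaseScan h S (coprimeTables h c) p P K t = true)
    (ht : t ≤ k → coprimeSum h x + coprimeSum h y ≤ k + S) (hkK : k < K) :
    coprimeSum h x + coprimeSum h y ≤ k + S := by
  induction K generalizing t with
  | zero => omega
  | succ K ih =>
    have hu := Finset.mem_Icc.mp htop.mem_Icc
    have hh := htop.pos
    have hxy' := hxy.mono (Nat.le_of_lt_succ hkK)
    have hs : x h ∈ Set.Icc 0 (h + K / h) := ⟨Nat.zero_le _, hxy'.top_le hh (Nat.zero_le _)⟩
    have hc : K / h + h < c := lt_of_le_of_lt (by gcongr; omega) hc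
    simp only [staircaseScan, force_eq] at hscan
    rcases (Nat.le_of_lt_succ hkK).eq_or_lt with rfl | hlt
    · split_ifs at hscan with hsmall hskip hjump
      · omega
      · rw [hset, Bool.or_false, decide_eq_true_eq] at hskip
        exact ht hskip
      · exact (hxy.coprimeSum_add_le_boxMax hh hc hc' hs hu p).trans hjump
      · exact hxy.coprimeSum_add_le_of_boxCheck hh hc hc' htop (Bool.and_eq_true_iff.mp hscan).1
          hs hu
    · split_ifs at hscan with hsmall hskip hjump
      · omega
      · exact ih hc hscan ht hlt
      · refine ih hc hscan (fun hle ↦ ?_) hlt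
        have := hxy'.coprimeSum_add_le_boxMax hh hc hc' hs hu p
        omega
      · exact ih hc (Bool.and_eq_true_iff.mp hscan).2 ht hlt

theorem IsRowBound.coprimeSum_add_le_of_staircaseCheck
    (hc : 2 * (h * (staircaseBound h / h + h + 1)) < tableBase) (hcheck : staircaseCheck h = true)
    (hkh : k < staircaseBound h) :
    coprimeSum h x + coprimeSum h y ≤ coprimeSum h id + (k + 4) := by
  simp only [staircaseCheck, forceList_eq, forcePath_eq, force_eq] at hcheck
  have hle := hxy.coprimeSum_add_le_of_staircaseScan htop hk hset (Nat.lt_succ_self _) hc hcheck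
    (fun hle ↦ absurd hkh hle.not_gt) hkh
  have hsum : ((List.range' 1 h).map fun n ↦ coprimeCount n n).sum = coprimeSum h id := by
    rw [coprimeSum, Finset.sum, Nat.Icc_eq_range']
    rfl
  omega

end Scan

theorem staircaseBound_le (h : ℕ) : staircaseBound h ≤ 1810 := by
  rcases lt_or_ge h 50 with hh | hh
  · revert h
    decide
  · simp [staircaseBound_eq_zero hh]

theorem mem_Icc_of_one_lt_staircaseBound {h : ℕ} (hh : 1 < staircaseBound h) :
    h ∈ Finset.Icc 5 49 := by
  rw [Finset.mem_Icc]
  by_contra! hout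
  have hle : ∀ h < 5, staircaseBound h ≤ 1 := by decide
  rcases lt_or_ge h 5 with h5 | h5
  · exact (hle h h5).not_gt hh
  · simp [staircaseBound_eq_zero (hout h5)] at hh

theorem two_mul_mul_lt_tableBase :
    ∀ h ∈ Finset.Icc 5 49, 2 * (h * (staircaseBound h / h + h + 1)) < tableBase := by
  decide

set_option maxRecDepth 10000 in
theorem staircaseCheck_eq_true : ∀ h ∈ Finset.Icc 5 49, staircaseCheck h = true := by
  decide +kernel

theorem IsRowBound.coprimeSum_add_le_of_lt_staircaseBound {k h : ℕ} {x y : ℕ → ℕ}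
    (hxy : IsRowBound k h x y) (htop : IsTopRow h (x h) (y h)) (hk : 3 * h ^ 2 ≤ 4 * k)
    (hset : isSettled k = false) (hkh : k < staircaseBound h) :
    coprimeSum h x + coprimeSum h y ≤ coprimeSum h id + (k + 4) := by
  have hpos : 0 < h ^ 2 := pow_pos htop.pos 2
  have hh := mem_Icc_of_one_lt_staircaseBound (by omega : 1 < staircaseBound h)
  exact hxy.coprimeSum_add_le_of_staircaseCheck htop hk hset (two_mul_mul_lt_tableBase h hh)
    (staircaseCheck_eq_true h hh) hkh

/-! ### The extremal sets -/

/-- The vectors with coprime coordinates in the upper half of the hexagon with vertices `±(p, 0)`,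
`±(p, p)`, `±(0, p)`, one from each pair of opposite vectors. -/
noncomputable def hexagonSet (p : ℕ) : Finset (ℤ × ℤ) :=
  (Finset.Icc (-p : ℤ) p ×ˢ Finset.Icc (0 : ℤ) p).filter fun u ↦
    u.1.gcd u.2 = 1 ∧ u.2 - p ≤ u.1 ∧ (u.2 = 0 → u.1 = 1)

theorem card_hexagonSet : ∀ p ∈ [5, 7, 11, 13], (hexagonSet p).card = p ^ 2 + 5 := by
  decide +kernel

/- The bound is strict since equality needs a vertex of the hexagon, where `p` divides both
coordinates. -/
theorem planeDet_lt_of_mem_hexagonSet {p : ℕ} (hp : 1 < p) {u v : ℤ × ℤ} (hu : u ∈ hexagonSet p)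
    (hv : v ∈ hexagonSet p) : planeDet u v < p ^ 2 := by
  obtain ⟨a, b⟩ := u
  obtain ⟨c, d⟩ := v
  simp only [hexagonSet, Finset.mem_filter, Finset.mem_product, Finset.mem_Icc, planeDet]
    at hu hv ⊢
  obtain ⟨⟨⟨-, ha⟩, hb₀, hb⟩, hab, -⟩ := hu
  obtain ⟨⟨-, hd₀, hd⟩, hcd, hc, -⟩ := hv
  have hdvd {m n : ℤ} (hmn : m.gcd n = 1) (hm : (p : ℤ) ∣ m) (hn : (p : ℤ) ∣ n) : False :=
    hp.ne' (Nat.dvd_one.mp (hmn ▸ Int.dvd_gcd hm hn))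
  have hda : 0 ≤ (p - a) * d := mul_nonneg (by omega) hd₀
  have hcb : 0 ≤ (c - (d - p)) * b := mul_nonneg (by omega) hb₀
  have hbd : 0 ≤ (p - b) * (p - d) := mul_nonneg (by omega) (by omega)
  by_contra! hdet
  have hsum : (p - a) * d + (c - (d - p)) * b + (p - b) * (p - d) ≤ 0 := by linarith
  have hda' : (p - a) * d = 0 := by omega
  have hcb' : (c - (d - p)) * b = 0 := by omega
  have hbd' : (p - b) * (p - d) = 0 := by omega
  simp only [mul_eq_zero] at hda' hcb' hbd'
  rcases hbd' with hbp | hdp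
  · obtain rfl : c = d - p := by omega
    rcases hda' with hap | rfl
    · exact hdvd hab ⟨1, by omega⟩ ⟨1, by omega⟩
    · exact hdvd hcd ⟨-1, by omega⟩ (dvd_zero _)
  · obtain rfl : a = p := by omega
    rcases hcb' with hcp | rfl
    · exact hdvd hcd ⟨0, by omega⟩ ⟨1, by omega⟩
    · exact hdvd hab dvd_rfl (dvd_zero _)

theorem isKNice_hexagonSet {p : ℕ} (hp : 1 < p) :
    IsKNice (p ^ 2 - 1) (hexagonSet p : Set (ℤ × ℤ)) := by
  have hmem {u : ℤ × ℤ} (hu : u ∈ hexagonSet p) :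
      0 ≤ u.2 ∧ u.1.gcd u.2 = 1 ∧ (u.2 = 0 → u.1 = 1) := by
    simp only [hexagonSet, Finset.mem_filter, Finset.mem_product, Finset.mem_Icc] at hu
    exact ⟨hu.1.2.1, hu.2.1, hu.2.2.2⟩
  refine ⟨fun u hu ↦ ⟨?_, (hmem hu).2.1⟩, fun u hu hu' ↦ ?_, fun u hu v hv ↦ ?_⟩
  · rintro rfl
    simpa using (hmem hu).2.1
  · obtain ⟨h₀, -, h₁⟩ := hmem hu
    obtain ⟨h₀', -, h₁'⟩ := hmem hu'
    simp only [Prod.fst_neg, Prod.snd_neg] at h₀' h₁'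
    omega
  · have huv := planeDet_lt_of_mem_hexagonSet hp hu hv
    have hvu := planeDet_lt_of_mem_hexagonSet hp hv hu
    rw [planeDet] at huv hvu
    push_cast [Nat.one_le_pow 2 p (by omega)]
    exact abs_le.mpr ⟨by linarith, by linarith⟩

theorem exists_isKNice_ncard_eq {p : ℕ} (hp : p ∈ [5, 7, 11, 13]) :
    ∃ Q : Set (ℤ × ℤ), IsKNice (p ^ 2 - 1) Q ∧ Q.Finite ∧ Q.ncard = p ^ 2 + 5 := by
  have hp₁ : ∀ p ∈ [5, 7, 11, 13], 1 < p := by decide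
  exact ⟨hexagonSet p, isKNice_hexagonSet (hp₁ p hp), Finset.finite_toSet _,
    (Set.ncard_coe_finset _).trans (card_hexagonSet p hp)⟩

/-! ### The characterization -/

theorem IsKNice.card_lt_add_six_or {k : ℕ} {Q : Finset (ℤ × ℤ)}
    (hQ : IsKNice k (Q : Set (ℤ × ℤ))) :
    Q.card < k + 6 ∨ k = 24 ∨ k = 48 ∨ k = 120 ∨ k = 168 := by
  rcases le_or_gt Q.card 1 with hcard | hcard
  · omega
  obtain ⟨h, x, y, hxy, htop, hkh, hle⟩ := hQ.exists_isRowBound hcard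
  have hh₀ : 0 < h ^ 2 := pow_pos htop.pos 2
  suffices hsum : isSettled k = true ∧ k ≤ 1810 ∨
      coprimeSum h x + coprimeSum h y ≤ coprimeSum h id + (k + 4) by
    rcases hsum with ⟨hset, hk'⟩ | hsum
    · refine (exists_prime_of_isSettled (by omega) (by omega) hset).imp_left ?_
      rintro ⟨q, hq, hkq, hqk⟩
      exact (hQ.card_le_of_prime hq hkq).trans_lt (by omega)
    · omega
  rcases lt_or_ge 1361 h with hh | hh
  · exact .inr ((hxy.coprimeSum_add_le_of_large htop hkh hh).trans (by omega))
  rcases le_or_gt (staircaseBound h) k with hbound | hbound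
  · exact .inr (hxy.coprimeSum_add_le_of_staircaseBound_le htop hkh hh hbound)
  cases hset : isSettled k
  · exact .inr (hxy.coprimeSum_add_le_of_lt_staircaseBound htop hkh hset hbound)
  · exact .inl ⟨rfl, hbound.le.trans (staircaseBound_le h)⟩

theorem kNice_card_eq_add_six_iff (k : ℕ) (hk : 1 ≤ k) :
    (∃ Q : Set (ℤ × ℤ), IsKNice k Q ∧ Q.Finite ∧ Q.ncard = k + 6) ↔
      k = 24 ∨ k = 48 ∨ k = 120 ∨ k = 168 := by
  constructor
  · rintro ⟨Q, hQ, hfin, hcard⟩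
    lift Q to Finset (ℤ × ℤ) using hfin
    rw [Set.ncard_coe_finset] at hcard
    exact hQ.card_lt_add_six_or.resolve_left hcard.not_lt
  · rintro (rfl | rfl | rfl | rfl)
    exacts [exists_isKNice_ncard_eq (p := 5) (by simp), exists_isKNice_ncard_eq (p := 7) (by simp),
      exists_isKNice_ncard_eq (p := 11) (by simp), exists_isKNice_ncard_eq (p := 13) (by simp)]
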